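/- Let d ≥ 2, 2 ≤ k ≤ d, and let E ⊂ ℝ^d be a compact set. If the Hausdorff dimension of E is greater than (dk+1)/(k+1), then the k(k+1)/2-dimensional Lebesgue measure of T_k(E) is positive. -/

import Mathlib

open MeasureTheory Metric Set Topology
open scoped ENNReal

noncomputable section

/-- `ℝ^d` as Euclidean space. -/
abbrev Pt (d : ℕ) := EuclideanSpace ℝ (Fin d)

/-- The index set of pairs `i < j` in `{1, …, k+1}`; it has `k(k+1)/2` elements. -/
abbrev PairIdx (k : ℕ) : Type := {p : Fin (k+1) × Fin (k+1) // p.1 < p.2}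

/-- The map sending a `(k+1)`-tuple of points to its vector of pairwise distances. -/
def simplexMap (d k : ℕ) (x : Fin (k+1) → Pt d) : PairIdx k → ℝ :=
  fun p => dist (x p.1.1) (x p.1.2)

/-- A `(k+1)`-tuple is nondegenerate if `x^2 - x^1, …, x^{k+1} - x^1` are linearly
independent. -/
def Nondeg (d k : ℕ) (x : Fin (k+1) → Pt d) : Prop :=
  LinearIndependent ℝ (fun i : Fin k => x i.succ - x 0)

/-- `T_k(E)`: the set of congruence classes of nondegenerate `k`-simplices with vertices in `E`,
realized as a subset of `ℝ^{k(k+1)/2}` via the pairwise-distance map. -/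
def Tconf (d k : ℕ) (E : Set (Pt d)) : Set (PairIdx k → ℝ) :=
  simplexMap d k '' {x | (∀ i, x i ∈ E) ∧ Nondeg d k x}

set_option autoImplicit false

/-! ### Frostman's lemma -/
namespace Fro

/-- Hausdorff content (with all countable covers). -/
def content (d : ℕ) (s : ℝ) (hs : 0 < s) : OuterMeasure (Pt d) :=
  OuterMeasure.ofFunction (fun A => ediam A ^ s) (by simp [hs])

lemma content_ne_zero (d : ℕ) (s : ℝ) (hs : 0 < s) (E : Set (Pt d))
    (h : ENNReal.ofReal s < dimH E) : content d s hs E ≠ 0 := by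
  intro h0
  have h1 : μH[((s.toNNReal : NNReal) : ℝ)] E = ⊤ := hausdorffMeasure_of_lt_dimH h
  rw [Real.coe_toNNReal s hs.le] at h1
  have h2 : μH[s] E ≤ 0 := by
    rw [Measure.hausdorffMeasure_apply]
    refine iSup_le fun r => iSup_le fun hr => ?_
    refine le_of_forall_gt_imp_ge_of_dense fun δ hδ => ?_
    have hm : (0 : ℝ≥0∞) < min δ (r ^ s) := lt_min hδ (by
      by_cases hrt : r = ⊤
      · simp [hrt, hs]
      · exact ENNReal.rpow_pos hr hrt)
    rw [content, OuterMeasure.ofFunction_apply] at h0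
    have : (⨅ t : ℕ → Set (Pt d), ⨅ (_ : E ⊆ iUnion t), ∑' n, ediam (t n) ^ s) < min δ (r ^ s) := by
      rw [h0]; exact hm
    rw [iInf_lt_iff] at this
    obtain ⟨t, ht⟩ := this
    rw [iInf_lt_iff] at ht
    obtain ⟨htE, ht⟩ := ht
    refine iInf_le_of_le t (iInf_le_of_le htE (iInf_le_of_le ?_ ?_))
    · intro n
      have : ediam (t n) ^ s ≤ r ^ s :=
        (ENNReal.le_tsum n).trans (ht.le.trans (min_le_right _ _))
      exact (ENNReal.rpow_le_rpow_iff hs).1 this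
    · refine le_trans (ENNReal.tsum_le_tsum fun n => ?_) (ht.le.trans (min_le_left _ _))
      exact iSup_le fun _ => le_rfl
  rw [h1] at h2
  simp at h2

variable {d : ℕ}

/-- dyadic index -/
def ix (n : ℕ) (x : Pt d) : Fin d → ℤ := fun i => ⌊(2:ℝ)^n * x i⌋

def par (q : Fin d → ℤ) : Fin d → ℤ := fun i => q i / 2

lemma par_ix (n : ℕ) (x : Pt d) : par (ix (n+1) x) = ix n x := by
  ext i
  simp only [par, ix]
  have := Int.floor_div_natCast ((2:ℝ)^(n+1) * x i) 2
  rw [show ((2:ℕ):ℤ) = 2 by rfl] at this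
  rw [← this]
  congr 1
  push_cast
  ring

lemma par_iter_ix (n j : ℕ) (x : Pt d) : par^[j] (ix (n+j) x) = ix n x := by
  induction j with
  | zero => rfl
  | succ j ih => rw [Function.iterate_succ_apply, ← add_assoc, par_ix, ih]

lemma par_fin (p : Fin d → ℤ) : {q : Fin d → ℤ | par q = p}.Finite := by
  refine (Set.Finite.pi' (t := fun i => Set.Icc (2 * p i) (2 * p i + 1))
    (fun i => Set.finite_Icc _ _)).subset ?_
  intro q hq i
  have : q i / 2 = p i := congrFun hq i
  simp only [Set.mem_Icc]
  omega

/-- part of E in a cell -/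
def Q (E : Set (Pt d)) (n : ℕ) (q : Fin d → ℤ) : Set (Pt d) := E ∩ {x | ix n x = q}

variable (s : ℝ) (hs : 0 < s) (E : Set (Pt d))

def a (n : ℕ) (q : Fin d → ℤ) : ℝ≥0∞ := content d s hs (Q E n q)

open Classical in
def S (n : ℕ) (p : Fin d → ℤ) : ℝ≥0∞ := ∑' q, if par q = p then a s hs E (n+1) q else 0

def W : ℕ → (Fin d → ℤ) → ℝ≥0∞
  | 0, q => a s hs E 0 q
  | (n+1), q => W n (par q) * (a s hs E (n+1) q / S s hs E n (par q))

lemma Q_diam (n : ℕ) (q : Fin d → ℤ) : ediam (Q E n q) ≤ ENNReal.ofReal (√d * (1/2)^n) := by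
  refine Metric.ediam_le fun x hx y hy => ?_
  rw [edist_dist]
  apply ENNReal.ofReal_le_ofReal
  rw [EuclideanSpace.dist_eq]
  have : ∀ i, dist (x i) (y i) ^ 2 ≤ ((1/2:ℝ)^n)^2 := by
    intro i
    have h1 : ⌊(2:ℝ)^n * x i⌋ = q i := congrFun hx.2 i
    have h2 : ⌊(2:ℝ)^n * y i⌋ = q i := congrFun hy.2 i
    have h3 := Int.abs_sub_lt_one_of_floor_eq_floor (h1.trans h2.symm)
    rw [← mul_sub, abs_mul, abs_of_pos (by positivity : (0:ℝ) < 2^n)] at h3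
    rw [Real.dist_eq]
    have : |x i - y i| ≤ (1/2)^n := by
      rw [one_div, inv_pow, ← one_div, le_div_iff₀ (by positivity)]
      linarith
    gcongr
  calc √(∑ i, dist (x i) (y i) ^ 2) ≤ √(∑ i : Fin d, ((1/2:ℝ)^n)^2) :=
        Real.sqrt_le_sqrt (Finset.sum_le_sum fun i _ => this i)
    _ = √d * (1/2)^n := by
        simp only [Finset.sum_const, Finset.card_univ, Fintype.card_fin, nsmul_eq_mul]
        rw [Real.sqrt_mul (by positivity), Real.sqrt_sq (by positivity)]

lemma a_le (n : ℕ) (q : Fin d → ℤ) : a s hs E n q ≤ ENNReal.ofReal ((√d * (1/2)^n)^s) := by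
  refine (OuterMeasure.ofFunction_le _).trans ?_
  rw [← ENNReal.ofReal_rpow_of_nonneg (by positivity) hs.le]
  exact ENNReal.rpow_le_rpow (Q_diam E n q) hs.le

lemma a_ne_top (n : ℕ) (q : Fin d → ℤ) : a s hs E n q ≠ ⊤ :=
  ne_top_of_le_ne_top ENNReal.ofReal_ne_top (a_le s hs E n q)

lemma S_ne_top (n : ℕ) (p : Fin d → ℤ) : S s hs E n p ≠ ⊤ := by
  classical
  unfold S
  rw [tsum_eq_sum (s := (par_fin p).toFinset)]
  · refine (ENNReal.sum_lt_top.2 fun q _ => ?_).ne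
    split_ifs
    · exact (a_ne_top s hs E _ _).lt_top
    · simp
  · intro q hq
    rw [if_neg]
    simpa using hq

lemma a_le_S (n : ℕ) (p : Fin d → ℤ) : a s hs E n p ≤ S s hs E n p := by
  classical
  unfold S
  have : Q E n p ⊆ ⋃ q, (if par q = p then Q E (n+1) q else ∅) := by
    intro x hx
    rw [mem_iUnion]
    refine ⟨ix (n+1) x, ?_⟩
    have hx2 : ix n x = p := hx.2
    rw [par_ix, if_pos hx2]
    exact ⟨hx.1, rfl⟩
  refine (measure_mono this).trans ((measure_iUnion_le _).trans (ENNReal.tsum_le_tsum fun q => ?_))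
  split_ifs
  · exact le_rfl
  · simp

lemma W_le_a (n : ℕ) (q : Fin d → ℤ) : W s hs E n q ≤ a s hs E n q := by
  induction n generalizing q with
  | zero => exact le_rfl
  | succ n ih =>
    simp only [W]
    calc _ ≤ S s hs E n (par q) * (a s hs E (n+1) q / S s hs E n (par q)) := by
          gcongr; exact (ih _).trans (a_le_S _ _ _ _ _)
      _ ≤ _ := ENNReal.mul_div_le

open Classical in
lemma W_sum (n : ℕ) (p : Fin d → ℤ) :
    ∑' q, (if par q = p then W s hs E (n+1) q else 0) = W s hs E n p := by
  have h1 : ∀ q, (if par q = p then W s hs E (n+1) q else 0)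
      = (W s hs E n p / S s hs E n p) * (if par q = p then a s hs E (n+1) q else 0) := by
    intro q
    split_ifs with h
    · simp only [W, h, div_eq_mul_inv]; ring
    · simp
  simp_rw [h1]
  rw [ENNReal.tsum_mul_left]
  change _ * S s hs E n p = _
  by_cases h0 : S s hs E n p = 0
  · have : W s hs E n p = 0 := by
      have := (W_le_a s hs E n p).trans (a_le_S s hs E n p)
      rw [h0] at this
      simpa using this
    simp [this]
  · exact ENNReal.div_mul_cancel h0 (S_ne_top s hs E n p)

open Classical in
lemma W_sum_iter (n j : ℕ) (p : Fin d → ℤ) :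
    ∑' q, (if par^[j] q = p then W s hs E (n+j) q else 0) = W s hs E n p := by
  induction j with
  | zero => simp
  | succ j ih =>
    rw [← ih]
    have : ∀ r, (if par^[j] r = p then W s hs E (n+j) r else 0)
      = ∑' q, (if par q = r then (if par^[j+1] q = p then W s hs E (n+(j+1)) q else 0) else 0) := by
      intro r
      split_ifs with h
      · rw [← W_sum]
        congr 1
        ext q
        split_ifs with h2 h3 h3
        · rfl
        · exfalso; apply h3; rw [Function.iterate_succ_apply, h2, h]
        · rfl
      · symm
        rw [ENNReal.tsum_eq_zero]
        intro q
        split_ifs with h2 h3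
        · exfalso; apply h; rw [← h3, Function.iterate_succ_apply, h2]
        · rfl
        · rfl
    simp_rw [this]
    rw [ENNReal.tsum_comm]
    congr 1
    ext q
    rw [tsum_ite_eq' (par q)]

lemma W_total (n : ℕ) : ∑' q, W s hs E n q = ∑' q, W s hs E 0 q := by
  classical
  induction n with
  | zero => rfl
  | succ n ih =>
    rw [← ih]
    simp_rw [← W_sum s hs E n]
    rw [ENNReal.tsum_comm]
    congr 1
    ext q
    rw [tsum_ite_eq' (par q)]

lemma Q_nonempty_of_W {n : ℕ} {q : Fin d → ℤ} (h : W s hs E n q ≠ 0) : (Q E n q).Nonempty := by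
  rw [Set.nonempty_iff_ne_empty]
  intro h0
  apply h
  have := W_le_a s hs E n q
  simpa [a, h0] using this

lemma ix_fin (hE : IsCompact E) (n : ℕ) : {q | (Q E n q).Nonempty}.Finite := by
  obtain ⟨R, hR⟩ := hE.isBounded.exists_norm_le
  refine (Set.Finite.pi' (t := fun _ : Fin d => Set.Icc (⌊-((2:ℝ)^n * R)⌋) (⌊(2:ℝ)^n * R⌋))
    (fun i => Set.finite_Icc _ _)).subset ?_
  rintro q ⟨x, hx, hxq⟩ i
  have h1 : ⌊(2:ℝ)^n * x i⌋ = q i := congrFun hxq i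
  rw [← h1]
  have h2 : |x i| ≤ R := by
    have := PiLp.norm_apply_le x i
    rw [Real.norm_eq_abs] at this
    exact this.trans (hR x hx)
  rw [abs_le] at h2
  have : (0:ℝ) < 2^n := by positivity
  constructor
  · apply Int.floor_le_floor; nlinarith
  · apply Int.floor_le_floor; nlinarith

lemma W_total_ne_top (hE : IsCompact E) : ∑' q, W s hs E 0 q ≠ ⊤ := by
  rw [tsum_eq_sum (s := (ix_fin E hE 0).toFinset)]
  · exact (ENNReal.sum_lt_top.2 fun q _ => (a_ne_top s hs E _ _).lt_top).ne
  · intro q hq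
    by_contra h
    exact hq (by simpa using Q_nonempty_of_W s hs E h)

lemma W_total_ne_zero (h : content d s hs E ≠ 0) : ∑' q, W s hs E 0 q ≠ 0 := by
  intro h0
  apply h
  have : E ⊆ ⋃ q, Q E 0 q := fun x hx => mem_iUnion.2 ⟨ix 0 x, hx, rfl⟩
  have h2 := (measure_mono (μ := content d s hs) this).trans (measure_iUnion_le _)
  have h3 : ∑' q, content d s hs (Q E 0 q) = 0 := h0
  rw [h3] at h2
  simpa using h2

end Fro

namespace Fro

lemma ball_ix {d : ℕ} {m : ℕ} {x y : Pt d} (h : dist x y ≤ (1/2)^m) (i : Fin d) :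
    ix m x i ∈ Finset.Icc (ix m y i - 1) (ix m y i + 1) := by
  have h1 : |x i - y i| ≤ (1/2)^m := by
    have := PiLp.norm_apply_le (x - y) i
    rw [Real.norm_eq_abs, ← dist_eq_norm] at this
    exact this.trans h
  have h2 : |(2:ℝ)^m * x i - 2^m * y i| ≤ 1 := by
    rw [← mul_sub, abs_mul, abs_of_pos (by positivity : (0:ℝ) < 2^m)]
    calc (2:ℝ)^m * |x i - y i| ≤ 2^m * (1/2)^m := by gcongr
      _ = 1 := by rw [← mul_pow]; norm_num
  rw [abs_le] at h2
  simp only [ix, Finset.mem_Icc]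
  constructor
  · rw [← Int.floor_sub_one]
    apply Int.floor_le_floor; linarith
  · rw [← Int.floor_add_one]
    apply Int.floor_le_floor; linarith

theorem frostman (d : ℕ) (E : Set (Pt d)) (hE : IsCompact E) (s : ℝ) (hs : 0 < s)
    (h : ENNReal.ofReal s < dimH E) :
    ∃ μ : Measure (Pt d), IsProbabilityMeasure μ ∧ μ Eᶜ = 0 ∧ ∃ C : ℝ, 0 < C ∧
      ∀ x, ∀ r > 0, μ (closedBall x r) ≤ ENNReal.ofReal (C * r ^ s) := by
  classical
  have hc := content_ne_zero d s hs E h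
  have hne : E.Nonempty := by
    rw [Set.nonempty_iff_ne_empty]
    rintro rfl
    simp at hc
  haveI : CompactSpace E := isCompact_iff_compactSpace.1 hE
  haveI : Nonempty E := hne.to_subtype
  set Z := ∑' q, W s hs E 0 q with hZ
  have hZ0 : Z ≠ 0 := W_total_ne_zero s hs E hc
  have hZt : Z ≠ ⊤ := W_total_ne_top s hs E hE
  have hpt : ∀ n q, ∃ e : E, (Q E n q).Nonempty → ix n (e : Pt d) = q := by
    intro n q
    by_cases hq : (Q E n q).Nonempty
    · obtain ⟨x, hx, hxq⟩ := hq
      exact ⟨⟨x, hx⟩, fun _ => hxq⟩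
    · exact ⟨Classical.arbitrary E, fun h => absurd h hq⟩
  choose pt hpt using hpt
  let M : ℕ → Measure E := fun n => Z⁻¹ • Measure.sum fun q => W s hs E n q • Measure.dirac (pt n q)
  have hMprob : ∀ n, IsProbabilityMeasure (M n) := by
    intro n
    constructor
    simp only [M, Measure.smul_apply, smul_eq_mul]
    rw [Measure.sum_apply _ MeasurableSet.univ]
    simp only [Measure.smul_apply, measure_univ, smul_eq_mul, mul_one]
    rw [W_total, ← hZ, ENNReal.inv_mul_cancel hZ0 hZt]
  -- ball estimate
  have hball : ∀ m n : ℕ, m ≤ n → ∀ (y : Pt d), ∀ A : Set E, MeasurableSet A →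
      (∀ e ∈ A, dist (e : Pt d) y ≤ (1/2)^m) →
      M n A ≤ Z⁻¹ * (3^d * ENNReal.ofReal ((√d * (1/2)^m)^s)) := by
    intro m n hmn y A hA hAy
    obtain ⟨j, rfl⟩ := Nat.exists_eq_add_of_le hmn
    simp only [M, Measure.smul_apply, smul_eq_mul]
    gcongr
    rw [Measure.sum_apply _ hA]
    simp only [Measure.smul_apply, smul_eq_mul]
    let N : Finset (Fin d → ℤ) := Fintype.piFinset fun i => Finset.Icc (ix m y i - 1) (ix m y i + 1)
    have hN : (N.card : ℝ≥0∞) = 3^d := by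
      simp only [N, Fintype.card_piFinset, Int.card_Icc]
      have : ∀ i, (ix m y i + 1 + 1 - (ix m y i - 1)).toNat = 3 := by intro i; omega
      simp [this]
    calc ∑' q, W s hs E (m+j) q * (Measure.dirac (pt (m+j) q)) A
        ≤ ∑' q, ∑ p ∈ N, (if par^[j] q = p then W s hs E (m+j) q else 0) := by
          refine ENNReal.tsum_le_tsum fun q => ?_
          by_cases hW : W s hs E (m+j) q = 0
          · simp [hW]
          rw [Measure.dirac_apply' _ hA]
          by_cases hp : pt (m+j) q ∈ A
          · have h1 := hpt (m+j) q (Q_nonempty_of_W s hs E hW)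
            have h2 : par^[j] q ∈ N := by
              rw [← h1, par_iter_ix]
              exact Fintype.mem_piFinset.2 fun i => ball_ix (hAy _ hp) i
            rw [Finset.sum_ite_eq, if_pos h2]
            simp [hp]
          · simp [hp]
      _ = ∑ p ∈ N, W s hs E m p := by
          rw [Summable.tsum_finsetSum (fun _ _ => ENNReal.summable)]
          refine Finset.sum_congr rfl fun p _ => ?_
          rw [W_sum_iter]
      _ ≤ ∑ p ∈ N, ENNReal.ofReal ((√d * (1/2)^m)^s) :=
          Finset.sum_le_sum fun p _ => (W_le_a _ _ _ _ _).trans (a_le _ _ _ _ _)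
      _ = _ := by rw [Finset.sum_const, nsmul_eq_mul, hN]
  let P : ℕ → ProbabilityMeasure E := fun n => ⟨M n, hMprob n⟩
  let U : Ultrafilter ℕ := Filter.hyperfilter ℕ
  let p : ProbabilityMeasure E := (U.map P).lim
  have hlim : Filter.Tendsto P (U : Filter ℕ) (𝓝 p) := (U.map P).le_nhds_lim
  have hU : (U : Filter ℕ) ≤ Filter.atTop := by
    have := Filter.hyperfilter_le_cofinite (α := ℕ)
    rwa [Nat.cofinite_eq_atTop] at this
  let C : ℝ := max 1 ((Z⁻¹ * 3^d).toReal * (√d * 4)^s)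
  refine ⟨(p : Measure E).map Subtype.val, ?_, ?_, 2 ^ s * C, by positivity, ?_⟩
  · exact Measure.isProbabilityMeasure_map measurable_subtype_coe.aemeasurable
  · rw [Measure.map_apply measurable_subtype_coe hE.measurableSet.compl]
    simp
  have hkey : ∀ y : Pt d, ∀ r > 0, (p : Measure E) (Subtype.val ⁻¹' ball y r)
      ≤ ENNReal.ofReal (C * r ^ s) := by
    intro y r hr
    by_cases hr1 : 1 < r
    · refine prob_le_one.trans ?_
      rw [← ENNReal.ofReal_one]
      apply ENNReal.ofReal_le_ofReal
      have h1 : 1 ≤ C := le_max_left _ _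
      have h2 : 1 ≤ r ^ s := Real.one_le_rpow hr1.le hs.le
      nlinarith
    · push Not at hr1
      obtain ⟨m, hm1, hm2⟩ := exists_nat_pow_near_of_lt_one hr hr1 (by norm_num : (0:ℝ) < 1/2)
        (by norm_num : (1/2:ℝ) < 1)
      have hopen : IsOpen ((Subtype.val : E → Pt d) ⁻¹' ball y r) :=
        isOpen_ball.preimage continuous_subtype_val
      have hl := ProbabilityMeasure.le_liminf_measure_open_of_tendsto hlim hopen
      refine hl.trans ?_
      have hev : ∀ᶠ n in (U : Filter ℕ), ((P n : Measure E) (Subtype.val ⁻¹' ball y r))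
          ≤ Z⁻¹ * (3^d * ENNReal.ofReal ((√d * (1/2)^m)^s)) := by
        refine hU (Filter.eventually_atTop.2 ⟨m, fun n hn => ?_⟩)
        refine hball m n hn y _ hopen.measurableSet ?_
        intro e he
        exact (le_of_lt he).trans hm2
      refine (Filter.liminf_le_of_frequently_le' hev.frequently).trans ?_
      have hft : Z⁻¹ * 3^d ≠ ⊤ := ENNReal.mul_ne_top (ENNReal.inv_ne_top.2 hZ0) (by simp)
      rw [← mul_assoc, ← ENNReal.ofReal_toReal hft, ← ENNReal.ofReal_mul ENNReal.toReal_nonneg]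
      apply ENNReal.ofReal_le_ofReal
      have h4 : (√d * (1/2)^m)^s ≤ (√d * 4)^s * r^s := by
        rw [← Real.mul_rpow (by positivity) hr.le]
        apply Real.rpow_le_rpow (by positivity) _ hs.le
        rw [mul_assoc]
        gcongr
        rw [pow_succ] at hm1
        nlinarith [hm1]
      calc _ ≤ (Z⁻¹ * 3^d).toReal * ((√d * 4)^s * r^s) := by gcongr
        _ = ((Z⁻¹ * 3^d).toReal * (√d * 4)^s) * r^s := by ring
        _ ≤ _ := by gcongr; exact le_max_right _ _
  intro y r hr
  rw [Measure.map_apply measurable_subtype_coe measurableSet_closedBall]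
  refine (measure_mono (preimage_mono (closedBall_subset_ball (by linarith : r < 2 * r)))).trans ?_
  refine (hkey y (2*r) (by linarith)).trans ?_
  rw [Real.mul_rpow (by norm_num) hr.le]
  apply le_of_eq
  congr 1
  ring

end Fro

/-! ### Preimages of null sets under submersions -/
namespace Sub

lemma null_preimage {X Y : Type*} [NormedAddCommGroup X] [NormedSpace ℝ X] [FiniteDimensional ℝ X]
    [MeasurableSpace X] [BorelSpace X] [NormedAddCommGroup Y] [NormedSpace ℝ Y]
    [FiniteDimensional ℝ Y] [MeasurableSpace Y] [BorelSpace Y]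
    (μ : Measure X) [μ.IsAddHaarMeasure] (ν : Measure Y) [ν.IsAddHaarMeasure]
    (f : X → Y) (hf : ContDiff ℝ 1 f) (U : Set X)
    (hs : ∀ x ∈ U, (fderiv ℝ f x : X →ₗ[ℝ] Y).range = ⊤) (T : Set Y) (hT : ν T = 0) :
    μ (U ∩ f ⁻¹' T) = 0 := by
  apply measure_null_of_locally_null
  rintro w ⟨hwU, -⟩
  set f' := fderiv ℝ f w with hf'
  obtain ⟨P, hP⟩ := Submodule.exists_isCompl (LinearMap.ker (f' : X →ₗ[ℝ] Y))
  -- linear projection on the kernel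
  let π := Submodule.projectionOnto _ P hP
  let Ll : X →ₗ[ℝ] Y × (LinearMap.ker (f' : X →ₗ[ℝ] Y)) := LinearMap.prod (f' : X →ₗ[ℝ] Y) π
  have hinj : Function.Injective Ll := by
    rw [← LinearMap.ker_eq_bot, LinearMap.ker_eq_bot']
    intro x hx
    have h1 : f' x = 0 := congrArg Prod.fst hx
    have h2 : π x = 0 := congrArg Prod.snd hx
    have h3 : x ∈ LinearMap.ker (f' : X →ₗ[ℝ] Y) := h1
    have h4 := Submodule.projectionOnto_apply_left hP ⟨x, h3⟩
    have h5 : (⟨x, h3⟩ : LinearMap.ker (f' : X →ₗ[ℝ] Y)) = 0 := by rw [← h4]; exact h2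
    exact congrArg Subtype.val h5
  have hsurj : Function.Surjective Ll := by
    have hfr : Module.finrank ℝ X = Module.finrank ℝ (Y × (LinearMap.ker (f' : X →ₗ[ℝ] Y))) := by
      rw [Module.finrank_prod, ← LinearMap.finrank_range_add_finrank_ker (f' : X →ₗ[ℝ] Y), hs w hwU,
        finrank_top]
    exact (LinearMap.injective_iff_surjective_of_finrank_eq_finrank hfr).1 hinj
  let L : X ≃L[ℝ] Y × (LinearMap.ker (f' : X →ₗ[ℝ] Y)) :=
    (LinearEquiv.ofBijective Ll ⟨hinj, hsurj⟩).toContinuousLinearEquiv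
  have hL : ∀ x, L x = (f' x, π x) := fun x => rfl
  let πc : X →L[ℝ] (LinearMap.ker (f' : X →ₗ[ℝ] Y)) := LinearMap.toContinuousLinearMap π
  let Φ : X → X := fun x => L.symm (f x, πc x)
  have hΦ : ContDiff ℝ 1 Φ := L.symm.contDiff.comp (hf.prodMk πc.contDiff)
  have hΦ' : HasFDerivAt Φ (ContinuousLinearMap.id ℝ X) w := by
    have h1 : HasFDerivAt f f' w := (hf.differentiable (by norm_num) w).hasFDerivAt
    have h2 := L.symm.hasFDerivAt.comp w (h1.prodMk πc.hasFDerivAt)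
    refine h2.congr_fderiv ?_
    ext x
    simp only [ContinuousLinearMap.comp_apply, ContinuousLinearMap.prod_apply]
    exact L.symm_apply_apply x
  have hstrict : HasStrictFDerivAt Φ ((ContinuousLinearEquiv.refl ℝ X : X ≃L[ℝ] X) : X →L[ℝ] X) w :=
    hΦ.contDiffAt.hasStrictFDerivAt' hΦ' (by norm_num)
  let e := hstrict.toOpenPartialHomeomorph Φ
  have hcont : Continuous (fun x => (fderiv ℝ Φ x).det) :=
    ContinuousLinearMap.continuous_det.comp (hΦ.continuous_fderiv (by norm_num))
  have hdet : ∀ᶠ x in 𝓝 w, (fderiv ℝ Φ x).det ≠ 0 := by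
    refine hcont.continuousAt.eventually_ne ?_
    rw [hΦ'.fderiv]
    simp [ContinuousLinearMap.det]
  have hsrc : e.source ∈ 𝓝 w := e.open_source.mem_nhds hstrict.mem_toOpenPartialHomeomorph_source
  obtain ⟨N, hNsub, hNo, hwN⟩ := _root_.mem_nhds_iff.1 (Filter.inter_mem hsrc hdet)
  let T' := toMeasurable ν T
  have hT'm : MeasurableSet T' := measurableSet_toMeasurable _ _
  have hT' : ν T' = 0 := by rw [measure_toMeasurable, hT]
  let s := N ∩ f ⁻¹' T'
  have hsm : MeasurableSet s := hNo.measurableSet.inter (hf.continuous.measurable hT'm)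
  refine ⟨s, ?_, ?_⟩
  · have : N ∈ 𝓝[U ∩ f ⁻¹' T] w := mem_nhdsWithin_of_mem_nhds (hNo.mem_nhds hwN)
    filter_upwards [this, self_mem_nhdsWithin] with x hx hx2
    exact ⟨hx, subset_toMeasurable _ _ hx2.2⟩
  have himg : μ (Φ '' s) = 0 := by
    refine measure_mono_null (t := L ⁻¹' (T' ×ˢ univ)) ?_ ?_
    · rintro _ ⟨x, hx, rfl⟩
      simp only [Φ, mem_preimage, ContinuousLinearEquiv.apply_symm_apply]
      exact ⟨hx.2, mem_univ _⟩
    · have hm : MeasurableSet (T' ×ˢ (univ : Set (LinearMap.ker (f' : X →ₗ[ℝ] Y)))) :=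
        hT'm.prod MeasurableSet.univ
      rw [← Measure.map_apply L.continuous.measurable hm]
      have : (μ.map L).IsAddHaarMeasure := L.isAddHaarMeasure_map μ
      let ρ : Measure (LinearMap.ker (f' : X →ₗ[ℝ] Y)) := Measure.addHaar
      have hac : μ.map L ≪ ν.prod ρ := Measure.absolutelyContinuous_isAddHaarMeasure _ _
      apply hac
      rw [Measure.prod_prod, hT', zero_mul]
  have hinjs : InjOn Φ s := by
    intro x hx y hy hxy
    exact e.injOn (hNsub hx.1).1 (hNsub hy.1).1 hxy
  have hint := lintegral_abs_det_fderiv_eq_addHaar_image μ hsm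
    (fun x _ => ((hΦ.differentiable (by norm_num) x).hasFDerivAt).hasFDerivWithinAt) hinjs
  rw [himg, lintegral_eq_zero_iff (by
    exact (ENNReal.continuous_ofReal.comp hcont.abs).measurable)] at hint
  rw [Filter.EventuallyEq, ae_restrict_iff' hsm] at hint
  have : ∀ᵐ x ∂μ, x ∉ s := by
    filter_upwards [hint] with x hx hxs
    have h1 := hx hxs
    simp only [Pi.zero_apply, ENNReal.ofReal_eq_zero] at h1
    have h2 : (fderiv ℝ Φ x).det ≠ 0 := (hNsub hxs.1).2
    exact absurd (abs_pos.2 h2) (not_lt.2 h1)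
  rw [ae_iff] at this
  simpa using this

lemma exists_inner {d k : ℕ} (u : Fin k → Pt d) (hu : LinearIndependent ℝ u) (c : Fin k → ℝ) :
    ∃ y : Pt d, ∀ i, inner ℝ (u i) y = c i := by
  obtain ⟨φ, hφ⟩ := LinearMap.exists_extend ((Module.Basis.span hu).constr ℝ c)
  refine ⟨(InnerProductSpace.toDual ℝ (Pt d)).symm (LinearMap.toContinuousLinearMap φ), fun i => ?_⟩
  rw [real_inner_comm, InnerProductSpace.toDual_symm_apply]
  have h1 := congrArg (fun g => g (Module.Basis.span hu i)) hφ
  simp only [LinearMap.comp_apply, Module.Basis.constr_basis, Submodule.subtype_apply] at h1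
  rw [Module.Basis.span_apply] at h1
  exact h1

/-- squared distances -/
def sqMap (d k : ℕ) (x : Fin (k+1) → Pt d) : PairIdx k → ℝ :=
  fun p => ‖x p.1.1 - x p.1.2‖ ^ 2

lemma sqMap_contDiff (d k : ℕ) : ContDiff ℝ 1 (sqMap d k) := by
  unfold sqMap
  rw [contDiff_pi]
  intro p
  exact ((contDiff_apply ℝ (Pt d) p.1.1).sub (contDiff_apply ℝ (Pt d) p.1.2)).norm_sq ℝ

lemma sqMap_fderiv (d k : ℕ) (w v : Fin (k+1) → Pt d) (p : PairIdx k) :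
    fderiv ℝ (sqMap d k) w v p = 2 * inner ℝ (w p.1.1 - w p.1.2) (v p.1.1 - v p.1.2) := by
  have h : HasFDerivAt (sqMap d k) (fderiv ℝ (sqMap d k) w) w :=
    ((sqMap_contDiff d k).differentiable (by norm_num) w).hasFDerivAt
  have h1 := (hasFDerivAt_pi'.1 h) p
  have h2 : HasFDerivAt (fun x : Fin (k+1) → Pt d => x p.1.1 - x p.1.2)
    (ContinuousLinearMap.proj (R := ℝ) (φ := fun _ : Fin (k+1) => Pt d) p.1.1 - ContinuousLinearMap.proj (R := ℝ) (φ := fun _ : Fin (k+1) => Pt d) p.1.2) w :=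
    (hasFDerivAt_apply p.1.1 w).sub (hasFDerivAt_apply p.1.2 w)
  have h3 := h2.norm_sq
  have h4 := h1.unique h3
  have h5 := congrArg (fun g => g v) h4
  rw [inner_sub_left, inner_sub_right, inner_sub_right]
  simp at h5
  rw [h5]; ring

lemma sqMap_surj (d k : ℕ) (w : Fin (k+1) → Pt d) (hw : Nondeg d k w) :
    (fderiv ℝ (sqMap d k) w : (Fin (k+1) → Pt d) →ₗ[ℝ] (PairIdx k → ℝ)).range = ⊤ := by
  rw [LinearMap.range_eq_top]
  intro t
  let D : Fin (k+1) → Fin (k+1) → ℝ := fun i j =>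
    if h : i < j then t ⟨(i, j), h⟩ / 2 else if h : j < i then t ⟨(j, i), h⟩ / 2 else 0
  have hDs : ∀ i j, D i j = D j i := by
    intro i j
    simp only [D]
    rcases lt_trichotomy i j with h | h | h
    · simp [h, h.not_gt]
    · simp [h]
    · simp [h, h.not_gt]
  have hD0 : ∀ i, D i i = 0 := by intro i; simp [D]
  let S : Fin (k+1) → Fin (k+1) → ℝ := fun i j => (D 0 i + D 0 j - D i j) / 2
  have hy : ∀ j : Fin (k+1), ∃ y : Pt d, ∀ i : Fin k, inner ℝ (w i.succ - w 0) y = S i.succ j :=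
    fun j => exists_inner _ hw _
  choose y hy using hy
  let v : Fin (k+1) → Pt d := fun j => if j = 0 then 0 else y j
  have hv : ∀ i j, inner ℝ (w i - w 0) (v j) = S i j := by
    intro i j
    by_cases hj : j = 0
    · simp only [v, hj, S, if_true, inner_zero_right, hD0]
      rw [hDs 0 i]; ring
    · simp only [v, if_neg hj]
      rcases Fin.eq_zero_or_eq_succ i with hi | ⟨i', hi⟩
      · simp only [hi, S, hD0]; simp
      · rw [hi]; exact hy j i'
  refine ⟨v, ?_⟩
  ext p
  have := sqMap_fderiv d k w v p
  obtain ⟨⟨i, j⟩, hij⟩ := p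
  simp only at this ⊢
  have hij' : i < j := hij
  refine this.trans ?_
  have : w i - w j = (w i - w 0) - (w j - w 0) := by abel
  rw [this, inner_sub_left, inner_sub_right, inner_sub_right, hv, hv, hv, hv]
  have hDij : D i j = t ⟨(i, j), hij⟩ / 2 := by simp [D, hij']
  simp only [S, hD0]
  rw [hDs j i, hDij]
  ring

theorem null_Tconf (d k : ℕ) (T : Set (PairIdx k → ℝ)) (hT : volume T = 0) :
    volume {w : Fin (k+1) → Pt d | Nondeg d k w ∧ simplexMap d k w ∈ T} = 0 := by
  let sq : (PairIdx k → ℝ) → (PairIdx k → ℝ) := fun t p => t p ^ 2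
  have hsq : Differentiable ℝ sq := by
    rw [differentiable_pi]
    intro p
    exact (differentiable_apply p).pow 2
  have hT2 : volume (sq '' T) = 0 :=
    addHaar_image_eq_zero_of_differentiableOn_of_addHaar_eq_zero volume hsq.differentiableOn hT
  have := null_preimage (volume : Measure (Fin (k+1) → Pt d)) (volume : Measure (PairIdx k → ℝ)) (sqMap d k) (sqMap_contDiff d k) {w | Nondeg d k w}
    (fun w hw => sqMap_surj d k w hw) (sq '' T) hT2
  refine measure_mono_null ?_ this
  rintro w ⟨hw, hwT⟩
  refine ⟨hw, _, hwT, ?_⟩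
  ext p
  simp [sq, simplexMap, sqMap, dist_eq_norm]

end Sub

/-! ### The orthogonal group -/
namespace Ort

/-- orthogonal group -/
def G (d : ℕ) : Type := unitary (Pt d →L[ℝ] Pt d)

variable {d : ℕ}

instance : Group (G d) := inferInstanceAs (Group (unitary (Pt d →L[ℝ] Pt d)))
instance : TopologicalSpace (G d) :=
  inferInstanceAs (TopologicalSpace (unitary (Pt d →L[ℝ] Pt d)))
instance : SecondCountableTopology (G d) :=
  inferInstanceAs (SecondCountableTopology (unitary (Pt d →L[ℝ] Pt d)))
instance : T2Space (G d) :=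
  inferInstanceAs (T2Space (unitary (Pt d →L[ℝ] Pt d)))

def val (g : G d) : Pt d →L[ℝ] Pt d := Subtype.val (p := fun x => x ∈ unitary (Pt d →L[ℝ] Pt d)) g

lemma val_continuous : Continuous (val : G d → _) := continuous_subtype_val

lemma star_cont : Continuous (fun A : Pt d →L[ℝ] Pt d => star A) := by
  simp only [ContinuousLinearMap.star_eq_adjoint]
  exact (ContinuousLinearMap.adjoint (𝕜 := ℝ) (E := Pt d) (F := Pt d)).continuous

def rot (g : G d) : Pt d ≃ₗᵢ[ℝ] Pt d := Unitary.linearIsometryEquiv g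

lemma rot_apply (g : G d) (v : Pt d) : rot g v = val g v := rfl

lemma rot_mul (g h : G d) (v : Pt d) : rot (g * h) v = rot g (rot h v) := rfl

lemma rot_inv (g : G d) : rot g⁻¹ = (rot g).symm := by
  unfold rot
  exact map_inv Unitary.linearIsometryEquiv g

instance : IsTopologicalGroup (G d) where
  continuous_mul := by
    refine Continuous.subtype_mk (f := fun p : G d × G d => val p.1 * val p.2) ?_ _
    exact (val_continuous.comp continuous_fst).mul (val_continuous.comp continuous_snd)
  continuous_inv := by
    refine Continuous.subtype_mk (f := fun p : G d => star (val p)) ?_ _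
    exact star_cont.comp val_continuous

instance : CompactSpace (G d) := by
  have : IsCompact ((unitary (Pt d →L[ℝ] Pt d) : Set (Pt d →L[ℝ] Pt d))) := by
    have : ProperSpace (Pt d →L[ℝ] Pt d) := FiniteDimensional.proper ℝ _
    refine Metric.isCompact_of_isClosed_isBounded ?_ ?_
    · have : (unitary (Pt d →L[ℝ] Pt d) : Set (Pt d →L[ℝ] Pt d))
        = {A | star A * A = 1} ∩ {A | A * star A = 1} := by
        ext A; simp [Unitary.mem_iff]
      rw [this]
      exact (isClosed_eq (star_cont.mul continuous_id) continuous_const).inter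
        (isClosed_eq (continuous_id.mul star_cont) continuous_const)
    · rw [isBounded_iff_forall_norm_le]
      refine ⟨1, fun A hA => ?_⟩
      refine ContinuousLinearMap.opNorm_le_bound _ zero_le_one fun x => ?_
      rw [one_mul]
      exact le_of_eq ((rot (⟨A, hA⟩ : unitary (Pt d →L[ℝ] Pt d))).norm_map x)
  exact isCompact_iff_compactSpace.1 this

instance : MeasurableSpace (G d) := borel _
instance : BorelSpace (G d) := ⟨rfl⟩

/-- normalized Haar measure -/
def θ : Measure (G d) := Measure.haarMeasure ⊤

instance : IsProbabilityMeasure (θ : Measure (G d)) where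
  measure_univ := by
    have := Measure.haarMeasure_self (K₀ := (⊤ : TopologicalSpace.PositiveCompacts (G d)))
    simpa [θ] using this

instance : (θ : Measure (G d)).IsMulLeftInvariant :=
  inferInstanceAs (Measure.haarMeasure ⊤).IsMulLeftInvariant

lemma rot_cont : Continuous (fun p : G d × Pt d => rot p.1 p.2) :=
  (val_continuous.comp continuous_fst).clm_apply continuous_snd

lemma rot_symm_cont : Continuous (fun p : G d × Pt d => (rot p.1).symm p.2) := by
  simp_rw [← rot_inv]
  exact rot_cont.comp ((continuous_fst.inv).prodMk continuous_snd)

lemma trans {v w : Pt d} (h : ‖v‖ = ‖w‖) : ∃ g : G d, rot g v = w := by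
  refine ⟨Unitary.linearIsometryEquiv.symm (Submodule.reflection (Submodule.span ℝ {v - w})ᗮ), ?_⟩
  unfold rot
  rw [MulEquiv.apply_symm_apply]
  exact Submodule.reflection_sub h

/-- radial averages -/
def avg (H : Pt d → ℝ≥0∞) (x : Pt d) : ℝ≥0∞ := ∫⁻ g : G d, H ((rot g).symm x) ∂θ

lemma avg_radial (H : Pt d → ℝ≥0∞) {v w : Pt d} (h : ‖v‖ = ‖w‖) : avg H v = avg H w := by
  obtain ⟨k, rfl⟩ := trans h
  unfold avg
  rw [← lintegral_mul_left_eq_self (fun g => H ((rot g).symm (rot k v))) k]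
  refine lintegral_congr fun g => ?_
  congr 1
  rw [← rot_inv, ← rot_inv, ← rot_mul]
  congr 2
  group

lemma avg_meas {H : Pt d → ℝ≥0∞} (hH : Measurable H) : Measurable (avg H) := by
  unfold avg
  exact Measurable.lintegral_prod_right' (f := fun p : Pt d × G d => H ((rot p.2).symm p.1))
    (hH.comp (rot_symm_cont.comp continuous_swap).measurable)

lemma lintegral_avg {H : Pt d → ℝ≥0∞} (hH : Measurable H) :
    ∫⁻ x, avg H x = ∫⁻ x, H x := by
  unfold avg
  rw [lintegral_lintegral_swap]
  · have : ∀ g : G d, ∫⁻ x, H ((rot g).symm x) = ∫⁻ x, H x := fun g =>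
      (rot g).symm.measurePreserving.lintegral_comp hH
    simp [this]
  · exact (hH.comp (rot_symm_cont.comp continuous_swap).measurable).aemeasurable

lemma avg_mul {H : Pt d → ℝ≥0∞} (a : ℝ → ℝ≥0∞) (x : Pt d) (hH : Measurable H) :
    avg (fun x => a ‖x‖ * H x) x = a ‖x‖ * avg H x := by
  unfold avg
  simp only [LinearIsometryEquiv.norm_map]
  rw [lintegral_const_mul]
  exact hH.comp (rot_symm_cont.comp (continuous_id.prodMk continuous_const)).measurable

lemma polar (hd : 0 < d) {f : ℝ → ℝ≥0∞} (hf : Measurable f) :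
    ∫⁻ x : Pt d, f ‖x‖ = (volume : Measure (Pt d)).toSphere univ *
      ∫⁻ y in Ioi (0:ℝ), ENNReal.ofReal (y ^ (d-1)) * f y := by
  have : Nontrivial (Pt d) := by
    have : Nonempty (Fin d) := ⟨⟨0, hd⟩⟩
    infer_instance
  have hdim : Module.finrank ℝ (Pt d) = d := by simp
  have h1 := (volume : Measure (Pt d)).measurePreserving_homeomorphUnitSphereProd
  have hm : Measurable (fun p : sphere (0 : Pt d) 1 × Ioi (0:ℝ) => f (p.2 : ℝ)) :=
    hf.comp (measurable_subtype_coe.comp measurable_snd)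
  calc ∫⁻ x : Pt d, f ‖x‖ = ∫⁻ x in ({0}ᶜ : Set (Pt d)), f ‖x‖ := by
        rw [restrict_compl_singleton]
    _ = ∫⁻ x : ({(0)}ᶜ : Set (Pt d)), f ‖x.1‖ ∂((volume : Measure (Pt d)).comap (↑)) := by
        rw [lintegral_subtype_comap (measurableSet_singleton _).compl (fun x => f ‖x‖)]
    _ = ∫⁻ p : sphere (0 : Pt d) 1 × Ioi (0:ℝ), f (p.2 : ℝ)
          ∂((volume : Measure (Pt d)).toSphere.prod (.volumeIoiPow (Module.finrank ℝ (Pt d) - 1))) := by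
        rw [← h1.lintegral_comp hm]
        simp
    _ = (volume : Measure (Pt d)).toSphere univ * ∫⁻ y : Ioi (0:ℝ), f y ∂(.volumeIoiPow (d - 1)) := by
        rw [lintegral_prod _ hm.aemeasurable, hdim]
        simp [mul_comm]
    _ = _ := by
        congr 1
        have hf' : Measurable fun y : Ioi (0:ℝ) => f y := hf.comp measurable_subtype_coe
        rw [Measure.volumeIoiPow, lintegral_withDensity_eq_lintegral_mul _ (by fun_prop) hf']
        rw [← lintegral_subtype_comap measurableSet_Ioi]
        rfl

lemma toSphere_pos (hd : 0 < d) : (volume : Measure (Pt d)).toSphere univ ≠ 0 := by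
  have : Nontrivial (Pt d) := by
    have : Nonempty (Fin d) := ⟨⟨0, hd⟩⟩
    infer_instance
  rw [Measure.toSphere_apply_univ]
  refine mul_ne_zero ?_ (measure_ball_pos _ _ one_pos).ne'
  simpa using hd.ne'

end Ort

/-! ### Fourier transforms -/
namespace Fou
open Complex (I)
open scoped Real RealInnerProductSpace

variable {d : ℕ}

/-- normalized Gaussian -/
def gau (R : ℝ) (v : Pt d) : ℝ := R ^ d * Real.exp (-(π * R ^ 2 * ‖v‖ ^ 2))

/-- its transform -/
def gh (R : ℝ) (v : Pt d) : ℝ := Real.exp (-(π / R ^ 2 * ‖v‖ ^ 2))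

/-- the unimodular character -/
def ch (t : ℝ) : ℂ := Complex.exp (((2 * π * t : ℝ) : ℂ) * I)

lemma norm_ch (t : ℝ) : ‖ch t‖ = 1 := Complex.norm_exp_ofReal_mul_I _

lemma ch_add (s t : ℝ) : ch (s + t) = ch s * ch t := by
  unfold ch; rw [← Complex.exp_add]; congr 1; push_cast; ring

lemma ch_conj (t : ℝ) : (starRingEnd ℂ) (ch t) = ch (-t) := by
  unfold ch; rw [← Complex.exp_conj]; congr 1
  rw [map_mul, Complex.conj_I, Complex.conj_ofReal]; push_cast; ring

lemma ch_cont : Continuous ch := by unfold ch; fun_prop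

lemma gau_cont (R : ℝ) : Continuous (gau R : Pt d → ℝ) := by unfold gau; fun_prop
lemma gh_cont (R : ℝ) : Continuous (gh R : Pt d → ℝ) := by unfold gh; fun_prop
lemma gau_nonneg {R : ℝ} (hR : 0 < R) (v : Pt d) : 0 ≤ gau R v := by unfold gau; positivity
lemma gh_pos (R : ℝ) (v : Pt d) : 0 < gh R v := Real.exp_pos _
lemma gh_le (R : ℝ) (v : Pt d) : gh R v ≤ 1 := by
  unfold gh; rw [Real.exp_le_one_iff]; simp; positivity

lemma gauFT {R : ℝ} (hR : 0 < R) (w : Pt d) :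
    ∫ ξ : Pt d, ch ⟪w, ξ⟫ * (gh R ξ : ℂ) = (gau R w : ℂ) := by
  have hb : 0 < (π / R ^ 2 : ℝ) := by positivity
  have h := GaussianFourier.integral_cexp_neg_mul_sq_norm_add (V := Pt d)
    (b := ((π / R ^ 2 : ℝ) : ℂ)) (by rw [Complex.ofReal_re]; exact hb) (2 * π * I) w
  have e1 : ∫ ξ : Pt d, ch ⟪w, ξ⟫ * (gh R ξ : ℂ) =
      ∫ v : Pt d, Complex.exp (-((π / R ^ 2 : ℝ) : ℂ) * ‖v‖ ^ 2 + (2 * π * I) * ⟪w, v⟫) := by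
    congr 1; ext ξ
    unfold ch gh
    rw [Complex.ofReal_exp, ← Complex.exp_add]
    congr 1; push_cast; ring
  rw [e1, h]
  have e2 : ((π : ℂ) / ((π / R ^ 2 : ℝ) : ℂ)) = ((R ^ 2 : ℝ) : ℂ) := by
    rw [← Complex.ofReal_div]; congr 1; field_simp
  rw [e2]
  unfold gau
  push_cast
  congr 1
  · have : ((Module.finrank ℝ (Pt d) : ℂ) / 2) = ((d / 2 : ℝ) : ℂ) := by simp
    rw [this, ← Complex.ofReal_pow, ← Complex.ofReal_cpow (by positivity), ← Complex.ofReal_pow]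
    congr 1
    rw [← Real.rpow_natCast R 2, ← Real.rpow_mul hR.le, ← Real.rpow_natCast]
    congr 1; push_cast; ring
  · congr 1
    have : (R : ℂ) ≠ 0 := by exact_mod_cast hR.ne'
    have hp : (π : ℂ) ≠ 0 := by exact_mod_cast Real.pi_ne_zero
    field_simp
    rw [Complex.I_sq]; ring

lemma gh_int {R : ℝ} (hR : 0 < R) : Integrable (gh R : Pt d → ℝ) := by
  have hb : 0 < (π / R ^ 2 : ℝ) := by positivity
  have h := GaussianFourier.integrable_cexp_neg_mul_sq_norm_add (V := Pt d)
    (b := ((π / R ^ 2 : ℝ) : ℂ)) (by rw [Complex.ofReal_re]; exact hb) 0 0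
  refine h.norm.congr (ae_of_all _ fun v => ?_)
  simp only [Complex.norm_exp, gh]
  congr 1
  rw [← Complex.ofReal_pow, ← Complex.ofReal_neg, ← Complex.ofReal_mul, zero_mul, add_zero,
    Complex.ofReal_re]
  ring

lemma gau_eq {R : ℝ} (hR : 0 < R) (v : Pt d) : gau R v = R ^ d * gh R⁻¹ v := by
  unfold gau gh; congr 3; field_simp

lemma gau_int {R : ℝ} (hR : 0 < R) : Integrable (gau R : Pt d → ℝ) := by
  have := (gh_int (d := d) (inv_pos.2 hR)).const_mul (R ^ d)
  exact this.congr (ae_of_all _ fun v => (gau_eq hR v).symm)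

lemma gau_mass {R : ℝ} (hR : 0 < R) : ∫ v : Pt d, gau R v = 1 := by
  have h := gauFT (d := d) (inv_pos.2 hR) 0
  simp only [inner_zero_left, ch, mul_zero, Complex.ofReal_zero, zero_mul, Complex.exp_zero,
    one_mul] at h
  rw [integral_complex_ofReal] at h
  have h : ∫ ξ : Pt d, gh R⁻¹ ξ = gau R⁻¹ (0 : Pt d) := by exact_mod_cast h
  simp_rw [gau_eq hR]
  rw [integral_const_mul, h]
  simp [gau, hR.ne']

lemma gau_lmass {R : ℝ} (hR : 0 < R) : ∫⁻ v : Pt d, ENNReal.ofReal (gau R v) = 1 := by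
  rw [← ofReal_integral_eq_lintegral_ofReal (gau_int hR) (ae_of_all _ fun v => gau_nonneg hR v),
    gau_mass hR, ENNReal.ofReal_one]

/-- the Fourier transform of `f ρ` -/
def F (ρ : Measure (Pt d)) (f : Pt d → ℂ) (ξ : Pt d) : ℂ := ∫ x, ch (-⟪x, ξ⟫) * f x ∂ρ

lemma F_cont (ρ : Measure (Pt d)) {f : Pt d → ℂ} (hf : Integrable f ρ) : Continuous (F ρ f) := by
  unfold F
  refine continuous_of_dominated (bound := fun x => ‖f x‖) ?_ ?_ hf.norm ?_
  · intro ξ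
    exact (ch_cont.comp (by fun_prop)).aestronglyMeasurable.mul hf.1
  · intro ξ
    refine ae_of_all _ fun x => ?_
    rw [norm_mul, norm_ch, one_mul]
  · refine ae_of_all _ fun x => ?_
    exact (ch_cont.comp (by fun_prop)).mul continuous_const

lemma F_norm_le (ρ : Measure (Pt d)) (f : Pt d → ℂ) (ξ : Pt d) : ‖F ρ f ξ‖ ≤ ∫ x, ‖f x‖ ∂ρ := by
  unfold F
  refine (norm_integral_le_integral_norm _).trans (le_of_eq ?_)
  congr 1; ext x
  rw [norm_mul, norm_ch, one_mul]

lemma pd_eq {R : ℝ} (hR : 0 < R) (ρ : Measure (Pt d)) [SFinite ρ] {f : Pt d → ℂ}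
    (hf : Integrable f ρ) :
    ∫ ξ, F ρ f ξ * (starRingEnd ℂ) (F ρ f ξ) * (gh R ξ : ℂ) =
      ∫ p, f p.1 * (starRingEnd ℂ) (f p.2) * (gau R (p.1 - p.2) : ℂ) ∂(ρ.prod ρ) := by
  have hfc : Integrable (fun x => (starRingEnd ℂ) (f x)) ρ :=
    Complex.conjLIE.toContinuousLinearEquiv.integrable_comp_iff.2 hf
  have hprod := hf.mul_prod hfc
  have e1 : ∀ ξ : Pt d, F ρ f ξ * (starRingEnd ℂ) (F ρ f ξ) * (gh R ξ : ℂ) =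
      ∫ p, f p.1 * (starRingEnd ℂ) (f p.2) * (ch ⟪p.2 - p.1, ξ⟫ * (gh R ξ : ℂ)) ∂(ρ.prod ρ) := by
    intro ξ
    unfold F
    rw [← integral_conj, ← integral_prod_mul, ← integral_mul_const]
    congr 1; ext p
    rw [map_mul, ch_conj, inner_sub_left, sub_eq_add_neg, ch_add, neg_neg]
    ring
  simp_rw [e1]
  rw [integral_integral_swap]
  · congr 1; ext p
    rw [integral_const_mul, gauFT hR, show gau R (p.2 - p.1) = gau R (p.1 - p.2) by
      unfold gau; rw [norm_sub_rev]]
  · have : Integrable (fun q : Pt d × (Pt d × Pt d) => (gh R q.1 : ℂ) *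
        (f q.2.1 * (starRingEnd ℂ) (f q.2.2))) (volume.prod (ρ.prod ρ)) :=
      ((gh_int hR).ofReal).mul_prod hprod
    have h2 := this.bdd_mul (c := 1) (f := fun q : Pt d × (Pt d × Pt d) => ch ⟪q.2.2 - q.2.1, q.1⟫)
      (ch_cont.comp (by fun_prop)).aestronglyMeasurable (ae_of_all _ fun q => (norm_ch _).le)
    refine h2.congr (ae_of_all _ fun q => ?_)
    simp only [Function.uncurry]
    ring

lemma pd_le {R : ℝ} (hR : 0 < R) (ρ : Measure (Pt d)) [SFinite ρ] {f : Pt d → ℂ}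
    (hf : Integrable f ρ) :
    ∫⁻ ξ, ‖F ρ f ξ‖ₑ ^ 2 * ENNReal.ofReal (gh R ξ) ≤
      ∫⁻ p, ‖f p.1‖ₑ * ‖f p.2‖ₑ * ENNReal.ofReal (gau R (p.1 - p.2)) ∂(ρ.prod ρ) := by
  have h := pd_eq hR ρ hf
  have hint : Integrable (fun ξ => ‖F ρ f ξ‖ ^ 2 * gh R ξ) := by
    refine (gh_int hR).bdd_mul (c := (∫ x, ‖f x‖ ∂ρ) ^ 2)
      ((F_cont ρ hf).norm.pow 2).aestronglyMeasurable (ae_of_all _ fun ξ => ?_)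
    rw [Real.norm_of_nonneg (by positivity)]
    exact pow_le_pow_left₀ (norm_nonneg _) (F_norm_le ρ f ξ) 2
  have e1 : ∀ ξ, F ρ f ξ * (starRingEnd ℂ) (F ρ f ξ) * (gh R ξ : ℂ) =
      ((‖F ρ f ξ‖ ^ 2 * gh R ξ : ℝ) : ℂ) := by
    intro ξ
    rw [Complex.mul_conj, Complex.normSq_eq_norm_sq]; push_cast; rfl
  simp_rw [e1] at h
  rw [integral_complex_ofReal] at h
  have e2 : ∫⁻ ξ, ‖F ρ f ξ‖ₑ ^ 2 * ENNReal.ofReal (gh R ξ) =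
      ENNReal.ofReal (∫ ξ, ‖F ρ f ξ‖ ^ 2 * gh R ξ) := by
    rw [ofReal_integral_eq_lintegral_ofReal hint
      (ae_of_all _ fun ξ => mul_nonneg (by positivity) (gh_pos R ξ).le)]
    refine lintegral_congr fun ξ => ?_
    rw [ENNReal.ofReal_mul (by positivity), ENNReal.ofReal_pow (norm_nonneg _), ofReal_norm]
  rw [e2]
  have e3 : ENNReal.ofReal (∫ ξ, ‖F ρ f ξ‖ ^ 2 * gh R ξ) =
      ‖((∫ ξ, ‖F ρ f ξ‖ ^ 2 * gh R ξ : ℝ) : ℂ)‖ₑ := by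
    rw [← ofReal_norm, Complex.norm_of_nonneg]
    exact integral_nonneg fun ξ => mul_nonneg (by positivity) (gh_pos R ξ).le
  rw [e3, h]
  refine (enorm_integral_le_lintegral_enorm _).trans (le_of_eq ?_)
  refine lintegral_congr fun p => ?_
  rw [enorm_mul, enorm_mul]
  congr 1
  · congr 1
    simp [← ofReal_norm]
  · rw [← ofReal_norm, Complex.norm_of_nonneg (gau_nonneg hR _)]

end Fou

namespace Fou
open Complex (I)
open scoped Real RealInnerProductSpace
variable {d : ℕ}

lemma two_mul_le_sq (a b : ℝ≥0∞) : 2 * (a * b) ≤ a ^ 2 + b ^ 2 := by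
  rcases le_total a b with h | h
  · obtain ⟨c, rfl⟩ := exists_add_of_le h
    calc 2 * (a * (a + c)) ≤ 2 * (a * (a + c)) + c ^ 2 := le_self_add
      _ = _ := by ring
  · obtain ⟨c, rfl⟩ := exists_add_of_le h
    calc 2 * ((b + c) * b) ≤ 2 * ((b + c) * b) + c ^ 2 := le_self_add
      _ = _ := by ring

lemma gau_symm (R : ℝ) (x y : Pt d) : gau R (x - y) = gau R (y - x) := by
  unfold gau; rw [norm_sub_rev]

lemma bessel_R {R : ℝ} (hR : 0 < R) {f : Pt d → ℂ} (hf : Integrable f) :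
    ∫⁻ ξ, ‖F volume f ξ‖ₑ ^ 2 * ENNReal.ofReal (gh R ξ) ≤ ∫⁻ x, ‖f x‖ₑ ^ 2 := by
  refine (pd_le hR volume hf).trans ?_
  have hg : Measurable (fun p : Pt d × Pt d => ENNReal.ofReal (gau R (p.1 - p.2))) :=
    ((gau_cont R).comp (by fun_prop)).measurable.ennreal_ofReal
  have m1 : AEMeasurable (fun p : Pt d × Pt d => ‖f p.1‖ₑ ^ 2 * ENNReal.ofReal (gau R (p.1 - p.2)))
      (volume.prod volume) := (hf.1.comp_fst.enorm.pow_const 2).mul hg.aemeasurable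
  have m2 : AEMeasurable (fun p : Pt d × Pt d => ‖f p.2‖ₑ ^ 2 * ENNReal.ofReal (gau R (p.1 - p.2)))
      (volume.prod volume) := (hf.1.comp_snd.enorm.pow_const 2).mul hg.aemeasurable
  have i1 : ∫⁻ p : Pt d × Pt d, ‖f p.1‖ₑ ^ 2 * ENNReal.ofReal (gau R (p.1 - p.2))
      ∂(volume.prod volume) = ∫⁻ x, ‖f x‖ₑ ^ 2 := by
    rw [lintegral_prod _ m1]
    refine lintegral_congr fun x => ?_
    have hm : Measurable (fun y : Pt d => ENNReal.ofReal (gau R (x - y))) :=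
      ((gau_cont R).comp (continuous_const.sub continuous_id)).measurable.ennreal_ofReal
    dsimp only
    rw [lintegral_const_mul _ hm,
      lintegral_sub_left_eq_self (μ := volume) (fun v : Pt d => ENNReal.ofReal (gau R v)) x, gau_lmass hR, mul_one]
  have i2 : ∫⁻ p : Pt d × Pt d, ‖f p.2‖ₑ ^ 2 * ENNReal.ofReal (gau R (p.1 - p.2))
      ∂(volume.prod volume) = ∫⁻ x, ‖f x‖ₑ ^ 2 := by
    rw [lintegral_prod_symm _ m2]
    refine lintegral_congr fun x => ?_
    have hm : Measurable (fun y : Pt d => ENNReal.ofReal (gau R (y - x))) :=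
      ((gau_cont R).comp (continuous_id.sub continuous_const)).measurable.ennreal_ofReal
    dsimp only
    rw [lintegral_const_mul _ hm,
      lintegral_sub_right_eq_self (μ := volume) (fun v : Pt d => ENNReal.ofReal (gau R v)) x, gau_lmass hR, mul_one]
  have key : 2 * ∫⁻ p : Pt d × Pt d, ‖f p.1‖ₑ * ‖f p.2‖ₑ * ENNReal.ofReal (gau R (p.1 - p.2))
      ∂(volume.prod volume) ≤ 2 * ∫⁻ x, ‖f x‖ₑ ^ 2 := by
    rw [← lintegral_const_mul' _ _ (by simp)]
    calc _ ≤ ∫⁻ p : Pt d × Pt d, (‖f p.1‖ₑ ^ 2 * ENNReal.ofReal (gau R (p.1 - p.2)) +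
          ‖f p.2‖ₑ ^ 2 * ENNReal.ofReal (gau R (p.1 - p.2))) ∂(volume.prod volume) := by
          refine lintegral_mono fun p => ?_
          simp only
          rw [← add_mul, ← mul_assoc]
          gcongr
          exact two_mul_le_sq _ _
      _ = _ := by rw [lintegral_add_left' m1, i1, i2, two_mul]
  exact (ENNReal.mul_le_mul_iff_right (by simp) (by simp)).1 key

lemma bessel {f : Pt d → ℂ} (hf : Integrable f) :
    ∫⁻ ξ, ‖F volume f ξ‖ₑ ^ 2 ≤ ∫⁻ x, ‖f x‖ₑ ^ 2 := by
  have hlim : ∀ ξ : Pt d, Filter.Tendsto (fun n : ℕ => ‖F volume f ξ‖ₑ ^ 2 *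
      ENNReal.ofReal (gh ((n : ℝ) + 1) ξ)) Filter.atTop (𝓝 (‖F volume f ξ‖ₑ ^ 2)) := by
    intro ξ
    have h1 : Filter.Tendsto (fun n : ℕ => gh ((n : ℝ) + 1) ξ) Filter.atTop (𝓝 1) := by
      unfold gh
      have : Filter.Tendsto (fun n : ℕ => ((n : ℝ) + 1) ^ 2) Filter.atTop Filter.atTop :=
        (Filter.tendsto_pow_atTop (by norm_num)).comp
          (Filter.tendsto_atTop_add_const_right _ _ tendsto_natCast_atTop_atTop)
      have h2 := (((this.const_div_atTop π).mul_const (‖ξ‖ ^ 2)).neg).rexp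
      simpa using h2
    have h3 := ENNReal.Tendsto.const_mul (a := ‖F volume f ξ‖ₑ ^ 2)
      (ENNReal.tendsto_ofReal h1) (Or.inr (by simp))
    simpa using h3
  calc ∫⁻ ξ, ‖F volume f ξ‖ₑ ^ 2 = ∫⁻ ξ, Filter.liminf (fun n : ℕ => ‖F volume f ξ‖ₑ ^ 2 *
      ENNReal.ofReal (gh ((n : ℝ) + 1) ξ)) Filter.atTop := by
        refine lintegral_congr fun ξ => (hlim ξ).liminf_eq.symm
    _ ≤ Filter.liminf (fun n : ℕ => ∫⁻ ξ, ‖F volume f ξ‖ₑ ^ 2 *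
      ENNReal.ofReal (gh ((n : ℝ) + 1) ξ)) Filter.atTop := by
        refine lintegral_liminf_le fun n => ?_
        exact ((F_cont volume hf).enorm.measurable.pow_const 2).mul
          (gh_cont _).measurable.ennreal_ofReal
    _ ≤ ∫⁻ x, ‖f x‖ₑ ^ 2 := by
        refine Filter.liminf_le_of_le (by isBoundedDefault) fun b hb => ?_
        obtain ⟨n, hn⟩ := hb.exists
        exact hn.trans (bessel_R (by positivity) hf)

/-- Frostman condition -/
def Fr (μ : Measure (Pt d)) (C s : ℝ) : Prop :=
  ∀ x, ∀ r > 0, μ (closedBall x r) ≤ ENNReal.ofReal (C * r ^ s)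

lemma frost_gau {μ : Measure (Pt d)} {C s : ℝ} (hC : 0 < C) (hs : 0 ≤ s) (hsd : s ≤ d)
    (h : Fr μ C s) : ∃ C' : ℝ, 0 < C' ∧ ∀ R > 0, ∀ x : Pt d,
      ∫⁻ y, ENNReal.ofReal (gau R (x - y)) ∂μ ≤ ENNReal.ofReal (C' * R ^ ((d : ℝ) - s)) := by
  have hsum : Summable (fun n : ℕ => C * (((n : ℝ) + 1) ^ s * Real.exp (-n))) := by
    refine Summable.mul_left _ ?_
    have h0 := (summable_nat_add_iff 1).2 (Real.summable_pow_mul_exp_neg_nat_mul d one_pos)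
    refine Summable.of_nonneg_of_le (fun n => by positivity) (fun n => ?_) (h0.mul_left (Real.exp 1))
    have e1 : Real.exp (-(n : ℝ)) = Real.exp 1 * Real.exp (-1 * ((n + 1 : ℕ) : ℝ)) := by
      rw [← Real.exp_add]; congr 1; push_cast; ring
    have e2 : ((n : ℝ) + 1) ^ s ≤ ((n : ℝ) + 1) ^ d := by
      rw [← Real.rpow_natCast]
      exact Real.rpow_le_rpow_of_exponent_le (by linarith [n.cast_nonneg (α := ℝ)]) hsd
    rw [e1]
    push_cast
    calc _ ≤ ((n : ℝ) + 1) ^ d * (Real.exp 1 * Real.exp (-1 * ((n : ℝ) + 1))) := by gcongr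
      _ = _ := by ring
  refine ⟨∑' n : ℕ, C * (((n : ℝ) + 1) ^ s * Real.exp (-n)), ?_, ?_⟩
  · exact hsum.tsum_pos (fun n => by positivity) 0 (by simp [hC])
  intro R hR x
  have hpt : ∀ y, ENNReal.ofReal (gau R (x - y)) ≤ ∑' n : ℕ,
      (closedBall x (((n : ℝ) + 1) / R)).indicator
        (fun _ => ENNReal.ofReal (R ^ d * Real.exp (-n))) y := by
    intro y
    set t := R * ‖x - y‖ with ht
    have ht0 : 0 ≤ t := by positivity
    refine le_trans ?_ (ENNReal.le_tsum ⌊t⌋₊)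
    have hy : y ∈ closedBall x (((⌊t⌋₊ : ℝ) + 1) / R) := by
      rw [mem_closedBall, dist_comm, dist_eq_norm, le_div_iff₀ hR, mul_comm]
      exact (Nat.lt_floor_add_one t).le
    rw [indicator_of_mem hy]
    refine ENNReal.ofReal_le_ofReal ?_
    unfold gau
    have : (⌊t⌋₊ : ℝ) ≤ π * R ^ 2 * ‖x - y‖ ^ 2 := by
      have h1 : (⌊t⌋₊ : ℝ) ≤ t := Nat.floor_le ht0
      have h2 : (⌊t⌋₊ : ℝ) ≤ (⌊t⌋₊ : ℝ) ^ 2 := by exact_mod_cast Nat.le_self_pow (by norm_num) _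
      have h3 : (⌊t⌋₊ : ℝ) ^ 2 ≤ t ^ 2 := by gcongr
      have h4 : t ^ 2 ≤ π * t ^ 2 := by nlinarith [Real.pi_gt_three, sq_nonneg t]
      calc _ ≤ π * t ^ 2 := by linarith
        _ = _ := by rw [ht]; ring
    gcongr
  calc _ ≤ ∫⁻ y, ∑' n : ℕ, (closedBall x (((n : ℝ) + 1) / R)).indicator
        (fun _ => ENNReal.ofReal (R ^ d * Real.exp (-n))) y ∂μ := lintegral_mono hpt
    _ = ∑' n : ℕ, ENNReal.ofReal (R ^ d * Real.exp (-n)) * μ (closedBall x (((n : ℝ) + 1) / R)) := by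
        rw [lintegral_tsum fun n =>
          (measurable_const.indicator measurableSet_closedBall).aemeasurable]
        congr 1; ext n
        rw [lintegral_indicator_const measurableSet_closedBall]
    _ ≤ ∑' n : ℕ, ENNReal.ofReal (R ^ ((d : ℝ) - s) * (C * (((n : ℝ) + 1) ^ s * Real.exp (-n)))) := by
        refine ENNReal.tsum_le_tsum fun n => ?_
        calc _ ≤ ENNReal.ofReal (R ^ d * Real.exp (-n)) *
              ENNReal.ofReal (C * (((n : ℝ) + 1) / R) ^ s) := by
                gcongr; exact h x _ (by positivity)
          _ = _ := by
            rw [← ENNReal.ofReal_mul (by positivity)]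
            congr 1
            rw [Real.div_rpow (by positivity) hR.le, Real.rpow_sub hR, Real.rpow_natCast]
            ring
    _ = _ := by
        rw [← ENNReal.ofReal_tsum_of_nonneg (fun n => by positivity) (hsum.mul_left _),
          tsum_mul_left, mul_comm]

lemma energy {μ : Measure (Pt d)} [IsProbabilityMeasure μ] {C s : ℝ} (hC : 0 < C) (hs : 0 ≤ s)
    (hsd : s ≤ d) (h : Fr μ C s) : ∃ C' : ℝ, 0 < C' ∧ ∀ (M : ℝ), 0 ≤ M → ∀ f : Pt d → ℂ,
      AEStronglyMeasurable f μ → (∀ᵐ x ∂μ, ‖f x‖ ≤ M) → ∀ R > 0,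
      ∫⁻ ξ in closedBall 0 R, ‖F μ f ξ‖ₑ ^ 2 ≤ ENNReal.ofReal (C' * M ^ 2 * R ^ ((d : ℝ) - s)) := by
  obtain ⟨C', hC', hg⟩ := frost_gau hC hs hsd h
  refine ⟨Real.exp π * C', by positivity, fun M hM f hf hfM R hR => ?_⟩
  have hint : Integrable f μ := Integrable.of_bound hf M hfM
  have hgm : Measurable (fun p : Pt d × Pt d => ENNReal.ofReal (gau R (p.1 - p.2))) :=
    ((gau_cont R).comp (by fun_prop)).measurable.ennreal_ofReal
  calc ∫⁻ ξ in closedBall 0 R, ‖F μ f ξ‖ₑ ^ 2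
      ≤ ∫⁻ ξ in closedBall 0 R, ENNReal.ofReal (Real.exp π) *
          (‖F μ f ξ‖ₑ ^ 2 * ENNReal.ofReal (gh R ξ)) := by
        refine setLIntegral_mono' measurableSet_closedBall fun ξ hξ => ?_
        have h1 : 1 ≤ Real.exp π * gh R ξ := by
          unfold gh
          rw [← Real.exp_add]
          apply Real.one_le_exp
          rw [mem_closedBall, dist_zero_right] at hξ
          have : ‖ξ‖ ^ 2 ≤ R ^ 2 := by gcongr
          have : π / R ^ 2 * ‖ξ‖ ^ 2 ≤ π / R ^ 2 * R ^ 2 := by gcongr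
          rw [div_mul_cancel₀ _ (by positivity)] at this
          linarith
        calc ‖F μ f ξ‖ₑ ^ 2 = ‖F μ f ξ‖ₑ ^ 2 * ENNReal.ofReal 1 := by simp
          _ ≤ ‖F μ f ξ‖ₑ ^ 2 * ENNReal.ofReal (Real.exp π * gh R ξ) := by gcongr
          _ = _ := by rw [ENNReal.ofReal_mul (by positivity)]; ring
    _ ≤ ∫⁻ ξ, ENNReal.ofReal (Real.exp π) *
          (‖F μ f ξ‖ₑ ^ 2 * ENNReal.ofReal (gh R ξ)) := setLIntegral_le_lintegral _ _
    _ = ENNReal.ofReal (Real.exp π) * ∫⁻ ξ, ‖F μ f ξ‖ₑ ^ 2 * ENNReal.ofReal (gh R ξ) := by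
        rw [lintegral_const_mul' _ _ (by simp)]
    _ ≤ ENNReal.ofReal (Real.exp π) * ∫⁻ p, ‖f p.1‖ₑ * ‖f p.2‖ₑ *
          ENNReal.ofReal (gau R (p.1 - p.2)) ∂(μ.prod μ) := by gcongr; exact pd_le hR μ hint
    _ ≤ ENNReal.ofReal (Real.exp π) * ∫⁻ p, ENNReal.ofReal (M ^ 2) *
          ENNReal.ofReal (gau R (p.1 - p.2)) ∂(μ.prod μ) := by
        gcongr 1
        refine lintegral_mono_ae ?_
        have a1 : ∀ᵐ p ∂(μ.prod μ), ‖f p.1‖ ≤ M := Measure.quasiMeasurePreserving_fst.ae hfM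
        have a2 : ∀ᵐ p ∂(μ.prod μ), ‖f p.2‖ ≤ M := Measure.quasiMeasurePreserving_snd.ae hfM
        filter_upwards [a1, a2] with p h1 h2
        gcongr
        rw [← ofReal_norm, ← ofReal_norm, ← ENNReal.ofReal_mul (norm_nonneg _), sq]
        exact ENNReal.ofReal_le_ofReal (by gcongr)
    _ ≤ ENNReal.ofReal (Real.exp π) * (ENNReal.ofReal (M ^ 2) *
          ENNReal.ofReal (C' * R ^ ((d : ℝ) - s))) := by
        gcongr 1
        rw [lintegral_const_mul _ hgm]
        gcongr 1
        rw [lintegral_prod _ hgm.aemeasurable]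
        calc _ ≤ ∫⁻ x, ENNReal.ofReal (C' * R ^ ((d : ℝ) - s)) ∂μ :=
              lintegral_mono fun x => hg R hR x
          _ = _ := by simp
    _ = _ := by
        rw [← ENNReal.ofReal_mul (by positivity), ← ENNReal.ofReal_mul (by positivity)]
        congr 1; ring

end Fou

namespace Fou
open Complex (I)
open scoped Real RealInnerProductSpace
open Ort
variable {d : ℕ}

lemma cs {α : Type*} [MeasurableSpace α] (μ : Measure α) {f g : α → ℝ≥0∞} (hf : AEMeasurable f μ)
    (hg : AEMeasurable g μ) : (∫⁻ a, f a * g a ∂μ) ^ 2 ≤ (∫⁻ a, f a ^ 2 ∂μ) * ∫⁻ a, g a ^ 2 ∂μ := by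
  have h := ENNReal.lintegral_mul_le_Lp_mul_Lq μ (Real.HolderConjugate.two_two) hf hg
  calc (∫⁻ a, f a * g a ∂μ) ^ 2 ≤ ((∫⁻ a, f a ^ (2:ℝ) ∂μ) ^ (1 / 2 : ℝ) *
        (∫⁻ a, g a ^ (2:ℝ) ∂μ) ^ (1 / 2 : ℝ)) ^ 2 := by gcongr; exact h
    _ = _ := by
      rw [mul_pow, ← ENNReal.rpow_natCast, ← ENNReal.rpow_mul, ← ENNReal.rpow_natCast,
        ← ENNReal.rpow_mul]
      norm_num

lemma cs_one {α : Type*} [MeasurableSpace α] (μ : Measure α) {g : α → ℝ≥0∞}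
    (hg : AEMeasurable g μ) : (∫⁻ a, g a ∂μ) ^ 2 ≤ μ univ * ∫⁻ a, g a ^ 2 ∂μ := by
  have := cs μ (f := fun _ => 1) aemeasurable_const hg
  simpa using this

lemma sq_add_le (a b : ℝ≥0∞) : (a + b) ^ 2 ≤ 2 * a ^ 2 + 2 * b ^ 2 := by
  have := two_mul_le_sq a b
  calc (a + b) ^ 2 = a ^ 2 + b ^ 2 + 2 * (a * b) := by ring
    _ ≤ a ^ 2 + b ^ 2 + (a ^ 2 + b ^ 2) := by gcongr
    _ = _ := by ring

lemma sob {f f' : ℝ → ℂ} (h : ∀ t, HasDerivAt f (f' t) t) (hc : Continuous f') (r : ℝ) :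
    ‖f r‖ₑ ^ 2 ≤ 2 * ∫⁻ t in Icc r (r + 1), (‖f t‖ₑ ^ 2 + ‖f' t‖ₑ ^ 2) := by
  have hfc : Continuous f := continuous_iff_continuousAt.2 fun t => (h t).continuousAt
  set L := ∫⁻ t in Icc r (r + 1), ‖f' t‖ₑ with hL
  have h1 : ∀ t ∈ Icc r (r + 1), ‖f r‖ₑ ≤ ‖f t‖ₑ + L := by
    intro t ht
    have e := intervalIntegral.integral_eq_sub_of_hasDerivAt (a := r) (b := t)
      (fun x _ => h x) (hc.intervalIntegrable _ _)
    have : f r = f t - ∫ x in r..t, f' x := by rw [e]; ring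
    rw [this]
    refine (enorm_sub_le).trans ?_
    gcongr
    rw [intervalIntegral.integral_of_le ht.1]
    refine (enorm_integral_le_lintegral_enorm _).trans ?_
    exact lintegral_mono_set fun x hx => ⟨hx.1.le, hx.2.trans ht.2⟩
  have hv : volume (Icc r (r + 1)) = 1 := by simp
  have h2 : L ^ 2 ≤ ∫⁻ t in Icc r (r + 1), ‖f' t‖ₑ ^ 2 := by
    have := cs_one (volume.restrict (Icc r (r + 1))) (g := fun t => ‖f' t‖ₑ)
      hc.enorm.measurable.aemeasurable
    rwa [Measure.restrict_apply_univ, hv, one_mul] at this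
  calc ‖f r‖ₑ ^ 2 = ∫⁻ t in Icc r (r + 1), ‖f r‖ₑ ^ 2 := by
        rw [setLIntegral_const, hv, mul_one]
    _ ≤ ∫⁻ t in Icc r (r + 1), (2 * ‖f t‖ₑ ^ 2 + 2 * L ^ 2) := by
        refine setLIntegral_mono' measurableSet_Icc fun t ht => ?_
        exact (by gcongr; exact h1 t ht : _ ≤ (‖f t‖ₑ + L) ^ 2).trans (sq_add_le _ _)
    _ = 2 * (∫⁻ t in Icc r (r + 1), ‖f t‖ₑ ^ 2) + 2 * L ^ 2 := by
        rw [lintegral_add_right _ measurable_const, setLIntegral_const, hv, mul_one,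
          lintegral_const_mul' _ _ (by simp)]
    _ ≤ 2 * (∫⁻ t in Icc r (r + 1), ‖f t‖ₑ ^ 2) + 2 * ∫⁻ t in Icc r (r + 1), ‖f' t‖ₑ ^ 2 := by
        gcongr
    _ = _ := by
        rw [← mul_add, lintegral_add_left (hfc.enorm.measurable.pow_const 2)]

/-- coordinate functions -/
def X (i : Fin d) (x : Pt d) : ℂ := ((x i : ℝ) : ℂ)

lemma X_cont (i : Fin d) : Continuous (X i : Pt d → ℂ) := by unfold X; fun_prop

lemma X_le (i : Fin d) (x : Pt d) : ‖X i x‖ ≤ ‖x‖ := by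
  unfold X; rw [Complex.norm_real]; exact PiLp.norm_apply_le x i

variable {μ : Measure (Pt d)} [IsProbabilityMeasure μ]

lemma F_deriv {M : ℝ} (hM : ∀ᵐ x ∂μ, ‖x‖ ≤ M) (η : Pt d) (t : ℝ) :
    HasDerivAt (fun t : ℝ => F μ (fun _ => 1) (t • η))
      (F μ (fun x => ((-2 * π * ⟪x, η⟫ : ℝ) : ℂ) * I) (t • η)) t := by
  unfold F
  have hm : ∀ t : ℝ, AEStronglyMeasurable (fun x : Pt d => ch (-⟪x, t • η⟫) * 1) μ := fun t =>
    ((ch_cont.comp (by fun_prop)).mul continuous_const).aestronglyMeasurable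
  refine (hasDerivAt_integral_of_dominated_loc_of_deriv_le (μ := μ)
    (F := fun (t : ℝ) (x : Pt d) => ch (-⟪x, t • η⟫) * 1)
    (F' := fun (t : ℝ) (x : Pt d) => ch (-⟪x, t • η⟫) * (((-2 * π * ⟪x, η⟫ : ℝ) : ℂ) * I))
    (bound := fun _ => 2 * π * (M * ‖η‖)) (s := univ) Filter.univ_mem
    (Filter.Eventually.of_forall hm) ?_ ?_ ?_ (integrable_const _) ?_).2
  · refine Integrable.of_bound (hm t) 1 (ae_of_all _ fun x => ?_)
    rw [norm_mul, norm_ch]; simp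
  · refine Continuous.aestronglyMeasurable ?_
    exact (ch_cont.comp (by fun_prop)).mul (by fun_prop)
  · filter_upwards [hM] with x hx t _
    rw [norm_mul, norm_ch, one_mul, norm_mul, Complex.norm_I, mul_one, Complex.norm_real]
    rw [norm_mul, Real.norm_eq_abs, show |-2 * π| = 2 * π by
      rw [neg_mul, abs_neg, abs_of_nonneg (by positivity)]]
    gcongr
    exact (norm_inner_le_norm _ _).trans (by gcongr)
  · refine ae_of_all _ fun x t _ => ?_
    unfold ch
    have : ∀ t : ℝ, Complex.exp (((2 * π * -⟪x, t • η⟫ : ℝ) : ℂ) * I) * 1 =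
        Complex.exp ((t : ℂ) * (((-2 * π * ⟪x, η⟫ : ℝ) : ℂ) * I)) := by
      intro t; rw [mul_one, real_inner_smul_right]; congr 1; push_cast; ring
    simp_rw [this]
    have e2 : Complex.exp (((2 * π * -⟪x, t • η⟫ : ℝ) : ℂ) * I) =
        Complex.exp ((t : ℂ) * (((-2 * π * ⟪x, η⟫ : ℝ) : ℂ) * I)) := by rw [← this t, mul_one]
    rw [e2]
    have h3 : HasDerivAt (fun t : ℝ => (t : ℂ) * (((-2 * π * ⟪x, η⟫ : ℝ) : ℂ) * I))
      (1 * (((-2 * π * ⟪x, η⟫ : ℝ) : ℂ) * I)) t := (Complex.ofRealCLM.hasDerivAt).mul_const _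
    rw [one_mul] at h3
    exact h3.cexp

lemma F_lin {M : ℝ} (hM : ∀ᵐ x ∂μ, ‖x‖ ≤ M) (η ξ : Pt d) :
    F μ (fun x => ((-2 * π * ⟪x, η⟫ : ℝ) : ℂ) * I) ξ =
      (-2 * π * I) * ∑ i, (η i : ℂ) * F μ (X i) ξ := by
  unfold F
  simp_rw [← integral_const_mul]
  rw [← integral_finsetSum, ← integral_const_mul]
  · congr 1; ext x
    simp_rw [X, PiLp.inner_apply, Finset.mul_sum]
    push_cast
    simp only [Finset.mul_sum, Finset.sum_mul]
    refine Finset.sum_congr rfl fun i _ => ?_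
    simp; ring
  · intro i _
    refine Integrable.const_mul ?_ _
    refine Integrable.of_bound ((ch_cont.comp (by fun_prop)).mul (X_cont i)).aestronglyMeasurable M ?_
    filter_upwards [hM] with x hx
    rw [norm_mul, norm_ch, one_mul]
    exact (X_le i x).trans hx

lemma F_lin_le {M : ℝ} (hM : ∀ᵐ x ∂μ, ‖x‖ ≤ M) (η ξ : Pt d) (hη : ‖η‖ = 1) :
    ‖F μ (fun x => ((-2 * π * ⟪x, η⟫ : ℝ) : ℂ) * I) ξ‖ₑ ^ 2 ≤
      ENNReal.ofReal ((2 * π) ^ 2) * ∑ i, ‖F μ (X i) ξ‖ₑ ^ 2 := by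
  have h : ‖F μ (fun x => ((-2 * π * ⟪x, η⟫ : ℝ) : ℂ) * I) ξ‖ ^ 2 ≤
      (2 * π) ^ 2 * ∑ i, ‖F μ (X i) ξ‖ ^ 2 := by
    rw [F_lin hM]
    rw [norm_mul, mul_pow]
    have e1 : ‖(-2 * π * I : ℂ)‖ = 2 * π := by
      simp [abs_of_pos Real.pi_pos]
    rw [e1]
    gcongr
    calc ‖∑ i, (η i : ℂ) * F μ (X i) ξ‖ ^ 2 ≤ (∑ i, |η i| * ‖F μ (X i) ξ‖) ^ 2 := by
          gcongr
          refine (norm_sum_le _ _).trans (le_of_eq ?_)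
          refine Finset.sum_congr rfl fun i _ => ?_
          rw [norm_mul, Complex.norm_real, Real.norm_eq_abs]
      _ ≤ (∑ i, |η i| ^ 2) * ∑ i, ‖F μ (X i) ξ‖ ^ 2 := Finset.sum_mul_sq_le_sq_mul_sq _ _ _
      _ = _ := by
          have : ∑ i, |η i| ^ 2 = 1 := by
            have := EuclideanSpace.norm_sq_eq η
            rw [hη] at this
            simpa using this.symm
          rw [this, one_mul]
  have h' := ENNReal.ofReal_le_ofReal h
  rw [ENNReal.ofReal_mul (by positivity), ENNReal.ofReal_sum_of_nonneg (fun i _ => by positivity),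
    ENNReal.ofReal_pow (norm_nonneg _), ofReal_norm] at h'
  refine h'.trans (le_of_eq ?_)
  congr 1
  refine Finset.sum_congr rfl fun i _ => ?_
  rw [ENNReal.ofReal_pow (norm_nonneg _), ofReal_norm]

end Fou

namespace Fou
open Complex (I)
open scoped Real RealInnerProductSpace
open Ort
variable {d : ℕ} {μ : Measure (Pt d)} [IsProbabilityMeasure μ]

/-- majorant -/
def Hm (μ : Measure (Pt d)) (ξ : Pt d) : ℝ≥0∞ :=
  ‖F μ (fun _ => 1) ξ‖ₑ ^ 2 + ENNReal.ofReal ((2 * π) ^ 2) * ∑ i, ‖F μ (X i) ξ‖ₑ ^ 2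

lemma X_int {M : ℝ} (hM : ∀ᵐ x ∂μ, ‖x‖ ≤ M) (i : Fin d) : Integrable (X i) μ := by
  refine Integrable.of_bound (X_cont i).aestronglyMeasurable M ?_
  filter_upwards [hM] with x hx
  exact (X_le i x).trans hx

lemma one_meas : Measurable (fun ξ => ‖F μ (fun _ => 1) ξ‖ₑ ^ 2) :=
  (F_cont μ (integrable_const _)).enorm.measurable.pow_const 2

lemma Xm_meas {M : ℝ} (hM : ∀ᵐ x ∂μ, ‖x‖ ≤ M) (i : Fin d) :
    Measurable (fun ξ => ‖F μ (X i) ξ‖ₑ ^ 2) :=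
  (F_cont μ (X_int hM i)).enorm.measurable.pow_const 2

lemma Hm_meas {M : ℝ} (hM : ∀ᵐ x ∂μ, ‖x‖ ≤ M) : Measurable (Hm μ) := by
  unfold Hm
  refine one_meas.add (Measurable.const_mul ?_ _)
  exact Finset.measurable_sum _ fun i _ => Xm_meas hM i

lemma Hm_energy {C s M : ℝ} (hC : 0 < C) (hs : 0 ≤ s) (hsd : s ≤ d) (h : Fr μ C s)
    (hM0 : 0 ≤ M) (hM : ∀ᵐ x ∂μ, ‖x‖ ≤ M) : ∃ C' : ℝ, 0 < C' ∧ ∀ R > 0,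
      ∫⁻ ξ in closedBall 0 R, Hm μ ξ ≤ ENNReal.ofReal (C' * R ^ ((d : ℝ) - s)) := by
  obtain ⟨C', hC', he⟩ := energy hC hs hsd h
  refine ⟨C' * 1 ^ 2 + (2 * π) ^ 2 * (d * (C' * M ^ 2)), by positivity, fun R hR => ?_⟩
  unfold Hm
  rw [lintegral_add_left one_meas, lintegral_const_mul _
    (Finset.measurable_sum _ fun i _ => Xm_meas hM i),
    lintegral_finsetSum _ (fun i _ => Xm_meas hM i)]
  have h1 := he 1 zero_le_one (fun _ => 1) aestronglyMeasurable_const (by simp) R hR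
  have h2 : ∀ i : Fin d, ∫⁻ ξ in closedBall 0 R, ‖F μ (X i) ξ‖ₑ ^ 2 ≤ _ := fun i =>
    he M hM0 (X i) (X_cont i).aestronglyMeasurable (by
      filter_upwards [hM] with x hx using (X_le i x).trans hx) R hR
  calc _ ≤ ENNReal.ofReal (C' * 1 ^ 2 * R ^ ((d : ℝ) - s)) + ENNReal.ofReal ((2 * π) ^ 2) *
        ∑ i : Fin d, ENNReal.ofReal (C' * M ^ 2 * R ^ ((d : ℝ) - s)) := by
          gcongr with i; exact h2 i
    _ = _ := by
        rw [Finset.sum_const, Finset.card_univ, Fintype.card_fin, nsmul_eq_mul,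
          ← ENNReal.ofReal_natCast, ← ENNReal.ofReal_mul (by positivity),
          ← ENNReal.ofReal_mul (by positivity), ← ENNReal.ofReal_add (by positivity) (by positivity)]
        congr 1; ring

lemma avg_le_int {M : ℝ} (hM : ∀ᵐ x ∂μ, ‖x‖ ≤ M) (e : Pt d) (he : ‖e‖ = 1) (r : ℝ) :
    avg (fun ξ => ‖F μ (fun _ => 1) ξ‖ₑ ^ 2) (r • e) ≤
      2 * ∫⁻ t in Icc r (r + 1), avg (Hm μ) (t • e) := by
  have hmeas : Measurable (fun p : G d × ℝ => Hm μ (p.2 • (rot p.1).symm e)) := by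
    refine (Hm_meas hM).comp ?_
    have h1 : Continuous (fun p : G d × ℝ => (rot p.1).symm e) :=
      rot_symm_cont.comp (f := fun p : G d × ℝ => (p.1, e))
        (continuous_fst.prodMk continuous_const)
    exact (continuous_snd.smul h1).measurable
  unfold avg
  simp only [map_smul]
  rw [lintegral_lintegral_swap (by exact (hmeas.comp measurable_swap).aemeasurable)]
  rw [← lintegral_const_mul' _ _ (by simp)]
  refine lintegral_mono fun g => ?_
  have hη : ‖(rot g).symm e‖ = 1 := by rw [LinearIsometryEquiv.norm_map, he]
  have hlint : Integrable (fun x : Pt d => ((-2 * π * ⟪x, (rot g).symm e⟫ : ℝ) : ℂ) * I) μ := by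
    refine Integrable.of_bound (Continuous.aestronglyMeasurable (by fun_prop)) (2 * π * M) ?_
    filter_upwards [hM] with x hx
    rw [norm_mul, Complex.norm_I, mul_one, Complex.norm_real]
    rw [norm_mul, Real.norm_eq_abs, show |-2 * π| = 2 * π by
      rw [neg_mul, abs_neg, abs_of_nonneg (by positivity)]]
    gcongr
    exact (norm_inner_le_norm _ _).trans (by rw [hη, mul_one]; exact hx)
  have := sob (F_deriv hM ((rot g).symm e))
    ((F_cont μ hlint).comp (continuous_id.smul continuous_const)) r
  refine this.trans ?_
  gcongr with t
  unfold Hm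
  gcongr
  exact F_lin_le hM _ _ hη

lemma int_le {M : ℝ} (hM : ∀ᵐ x ∂μ, ‖x‖ ≤ M) (hd : 0 < d) (e : Pt d) (he : ‖e‖ = 1)
    {r : ℝ} (hr : 0 < r) :
    (volume : Measure (Pt d)).toSphere univ * (ENNReal.ofReal (r ^ (d - 1)) *
      ∫⁻ t in Icc r (r + 1), avg (Hm μ) (t • e)) ≤ ∫⁻ ξ in closedBall 0 (r + 1), Hm μ ξ := by
  set ind : ℝ → ℝ≥0∞ := (Icc r (r + 1)).indicator 1 with hind
  have hindm : Measurable ind := measurable_one.indicator measurableSet_Icc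
  have havm : Measurable (fun t : ℝ => avg (Hm μ) (t • e)) :=
    (avg_meas (Hm_meas hM)).comp (measurable_id.smul_const e)
  have hp := polar hd (f := fun t => ind t * avg (Hm μ) (t • e)) (hindm.mul havm)
  calc _ ≤ (volume : Measure (Pt d)).toSphere univ *
      ∫⁻ y in Ioi (0:ℝ), ENNReal.ofReal (y ^ (d-1)) * (ind y * avg (Hm μ) (y • e)) := by
        gcongr 1
        rw [← lintegral_const_mul' _ _ (by simp), ← lintegral_indicator measurableSet_Icc,
          ← lintegral_indicator measurableSet_Ioi]
        refine lintegral_mono fun t => ?_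
        by_cases ht : t ∈ Icc r (r + 1)
        · have ht0 : t ∈ Ioi (0:ℝ) := hr.trans_le ht.1
          rw [indicator_of_mem ht, indicator_of_mem ht0, hind, indicator_of_mem ht, Pi.one_apply,
            one_mul]
          gcongr
          exact ht.1
        · rw [indicator_of_notMem ht]; exact zero_le
    _ = ∫⁻ x : Pt d, ind ‖x‖ * avg (Hm μ) (‖x‖ • e) := hp.symm
    _ = ∫⁻ x : Pt d, avg (fun x => ind ‖x‖ * Hm μ x) x := by
        refine lintegral_congr fun x => ?_
        rw [avg_mul _ _ (Hm_meas hM)]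
        congr 1
        apply avg_radial
        rw [norm_smul, he]; simp
    _ = ∫⁻ x : Pt d, ind ‖x‖ * Hm μ x := by
        rw [lintegral_avg]
        exact (hindm.comp measurable_norm).mul (Hm_meas hM)
    _ ≤ _ := by
        rw [← lintegral_indicator measurableSet_closedBall]
        refine lintegral_mono fun x => ?_
        by_cases hx : ‖x‖ ∈ Icc r (r + 1)
        · have : x ∈ closedBall (0 : Pt d) (r + 1) := by
            rw [mem_closedBall, dist_zero_right]; exact hx.2
          rw [indicator_of_mem this, hind, indicator_of_mem hx, Pi.one_apply, one_mul]
        · simp only [hind]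
          rw [indicator_of_notMem hx, zero_mul]; exact zero_le

lemma spherical {C s M : ℝ} (hd : 0 < d) (hC : 0 < C) (hs : 0 ≤ s) (hsd : s ≤ d) (h : Fr μ C s)
    (hM0 : 0 ≤ M) (hM : ∀ᵐ x ∂μ, ‖x‖ ≤ M) : ∃ C' : ℝ, 0 < C' ∧ ∀ ξ : Pt d, 1 ≤ ‖ξ‖ →
      avg (fun ξ => ‖F μ (fun _ => 1) ξ‖ₑ ^ 2) ξ ≤ ENNReal.ofReal (C' * ‖ξ‖ ^ (1 - s)) := by
  obtain ⟨C', hC', he⟩ := Hm_energy hC hs hsd h hM0 hM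
  set σ := (volume : Measure (Pt d)).toSphere univ with hσ
  have hσ0 : σ ≠ 0 := toSphere_pos hd
  have hσt : σ ≠ ⊤ := measure_ne_top _ _
  have hσp : 0 < σ.toReal := ENNReal.toReal_pos hσ0 hσt
  refine ⟨2 * (C' * 2 ^ ((d : ℝ) - s) / σ.toReal), by positivity, fun ξ hξ => ?_⟩
  set r := ‖ξ‖ with hr
  have hr0 : 0 < r := by linarith
  set e := r⁻¹ • ξ with hedef
  have hen : ‖e‖ = 1 := by
    rw [hedef, norm_smul, norm_inv, norm_norm, inv_mul_cancel₀ hr0.ne']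
  have hξe : ξ = r • e := by rw [hedef, smul_smul, mul_inv_cancel₀ hr0.ne', one_smul]
  have h1 := avg_le_int hM e hen r
  have h2 := (int_le hM hd e hen hr0).trans (he (r + 1) (by linarith))
  rw [← hξe] at h1
  refine h1.trans ?_
  set Q := ∫⁻ t in Icc r (r + 1), avg (Hm μ) (t • e)
  have h3 : ENNReal.ofReal (σ.toReal * r ^ (d - 1)) * Q ≤
      ENNReal.ofReal (C' * (2 ^ ((d : ℝ) - s) * r ^ ((d : ℝ) - s))) := by
    rw [ENNReal.ofReal_mul hσp.le, ENNReal.ofReal_toReal hσt, mul_assoc]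
    refine h2.trans (ENNReal.ofReal_le_ofReal ?_)
    rw [← Real.mul_rpow (by norm_num) hr0.le]
    gcongr
    linarith
  have hpos : 0 < σ.toReal * r ^ (d - 1) := by positivity
  have h4 : Q ≤ ENNReal.ofReal (C' * (2 ^ ((d : ℝ) - s) * r ^ ((d : ℝ) - s))) /
      ENNReal.ofReal (σ.toReal * r ^ (d - 1)) := by
    rw [ENNReal.le_div_iff_mul_le (Or.inl (ENNReal.ofReal_pos.2 hpos).ne') (Or.inl ENNReal.ofReal_ne_top), mul_comm]
    exact h3
  rw [← ENNReal.ofReal_div_of_pos hpos] at h4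
  calc 2 * Q ≤ ENNReal.ofReal 2 * ENNReal.ofReal
        (C' * (2 ^ ((d : ℝ) - s) * r ^ ((d : ℝ) - s)) / (σ.toReal * r ^ (d - 1))) := by
          rw [show ENNReal.ofReal 2 = 2 by simp]; gcongr
    _ = _ := by
        rw [← ENNReal.ofReal_mul (by norm_num)]
        congr 1
        have : r ^ ((d : ℝ) - s) = r ^ (1 - s) * r ^ (d - 1) := by
          rw [← Real.rpow_natCast, ← Real.rpow_add hr0]
          congr 1
          rw [Nat.cast_sub (by omega)]; push_cast; ring
        rw [this]
        field_simp

end Fou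

namespace Fou
open Complex (I)
open scoped Real RealInnerProductSpace
open Ort
variable {d : ℕ}

lemma sum_pow_le {p : ℕ} (hp : p ≠ 0) (t a : ℕ → ℝ≥0∞) (ha0 : ∀ j, a j ≠ 0) (hat : ∀ j, a j ≠ ⊤) :
    (∑' j, t j) ^ p ≤ (∑' j, a j) ^ p * ∑' j, (t j / a j) ^ p := by
  set W := ∑' j, (t j / a j) ^ p with hW
  set S := W ^ ((p : ℝ)⁻¹) with hS
  have hp' : (0:ℝ) < p := by exact_mod_cast Nat.pos_of_ne_zero hp
  have hSp : S ^ p = W := by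
    rw [hS, ← ENNReal.rpow_natCast, ← ENNReal.rpow_mul, inv_mul_cancel₀ hp'.ne', ENNReal.rpow_one]
  have h1 : ∀ j, t j ≤ a j * S := by
    intro j
    have h2 : t j / a j ≤ S := by
      rw [hS, ENNReal.le_rpow_inv_iff hp', ENNReal.rpow_natCast]
      exact ENNReal.le_tsum (f := fun j => (t j / a j) ^ p) j
    rw [mul_comm]
    exact (ENNReal.div_le_iff (ha0 j) (hat j)).1 h2
  calc (∑' j, t j) ^ p ≤ (∑' j, a j * S) ^ p := by gcongr with j; exact h1 j
    _ = _ := by rw [ENNReal.tsum_mul_right, mul_pow, hSp]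

variable {μ : Measure (Pt d)} [IsProbabilityMeasure μ]

/-- the product of the transforms -/
def cc (μ : Measure (Pt d)) (g : G d) (ξ : Pt d) : ℂ :=
  F μ (fun _ => 1) ξ * (starRingEnd ℂ) (F μ (fun _ => 1) ((rot g).symm ξ))

lemma F_one_le (ξ : Pt d) : ‖F μ (fun _ => 1) ξ‖ ≤ 1 := by
  refine (F_norm_le μ _ ξ).trans ?_
  simp

lemma F1_cont : Continuous (F μ (fun _ => 1)) := F_cont μ (integrable_const _)

lemma cc_le (g : G d) (ξ : Pt d) : ‖cc μ g ξ‖ ≤ 1 := by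
  unfold cc
  rw [norm_mul, RCLike.norm_conj]
  exact mul_le_one₀ (F_one_le _) (norm_nonneg _) (F_one_le _)

lemma cc_cont : Continuous (fun p : G d × Pt d => cc μ p.1 p.2) := by
  unfold cc
  exact (F1_cont.comp continuous_snd).mul (Complex.continuous_conj.comp (F1_cont.comp rot_symm_cont))

/-- the convolution-type quantity -/
def N (μ : Measure (Pt d)) (R : ℝ) (g : G d) (ζ : Pt d) : ℝ≥0∞ :=
  ∫⁻ p, ENNReal.ofReal (gau R (rot g p.1 + ζ - p.2)) ∂(μ.prod μ)

/-- the integrand -/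
def ig (μ : Measure (Pt d)) (R : ℝ) (g : G d) (ζ ξ : Pt d) : ℂ :=
  ch ⟪ζ, ξ⟫ * (cc μ g ξ * (gh R ξ : ℂ))

lemma ig_le (R : ℝ) (g : G d) (ζ ξ : Pt d) : ‖ig μ R g ζ ξ‖ ≤ gh R ξ := by
  unfold ig
  rw [norm_mul, norm_ch, one_mul, norm_mul, Complex.norm_of_nonneg (gh_pos R ξ).le]
  calc _ ≤ 1 * gh R ξ := by gcongr; exacts [(gh_pos R ξ).le, cc_le g ξ]
    _ = _ := one_mul _

lemma ig_cont (R : ℝ) : Continuous (fun p : (G d × Pt d) × Pt d => ig μ R p.1.1 p.1.2 p.2) := by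
  unfold ig
  have h1 : Continuous (fun p : (G d × Pt d) × Pt d => cc μ p.1.1 p.2) :=
    cc_cont.comp (f := fun p : (G d × Pt d) × Pt d => (p.1.1, p.2)) (by fun_prop)
  have h2 : Continuous (fun p : (G d × Pt d) × Pt d => ch ⟪p.1.2, p.2⟫) :=
    ch_cont.comp (by fun_prop)
  have h3 : Continuous (fun p : (G d × Pt d) × Pt d => ((gh R p.2 : ℝ) : ℂ)) :=
    Complex.continuous_ofReal.comp ((gh_cont R).comp continuous_snd)
  exact h2.mul (h1.mul h3)

lemma ig_cont1 (R : ℝ) (g : G d) (ζ : Pt d) : Continuous (fun ξ => ig μ R g ζ ξ) :=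
  (ig_cont R).comp (f := fun ξ : Pt d => ((g, ζ), ξ)) (by fun_prop)

lemma ig_int {R : ℝ} (hR : 0 < R) (g : G d) (ζ : Pt d) : Integrable (ig μ R g ζ) :=
  (gh_int hR).mono' (ig_cont1 R g ζ).aestronglyMeasurable (ae_of_all _ (ig_le R g ζ))

lemma N_eq {R : ℝ} (hR : 0 < R) (g : G d) (ζ : Pt d) :
    N μ R g ζ = ‖∫ ξ, ig μ R g ζ ξ‖ₑ := by
  have hc : Continuous (fun p : Pt d × Pt d => gau R (rot g p.1 + ζ - p.2)) :=
    (gau_cont R).comp (by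
      have := (rot g).continuous
      fun_prop)
  have e1 : ∀ ξ, ig μ R g ζ ξ = ∫ p : Pt d × Pt d, ch ⟪rot g p.1 + ζ - p.2, ξ⟫ * (gh R ξ : ℂ)
      ∂(μ.prod μ) := by
    intro ξ
    unfold ig cc
    rw [integral_mul_const]
    rw [← mul_assoc]
    congr 1
    unfold F
    rw [← integral_conj, mul_comm (∫ x, ch (-⟪x, ξ⟫) * 1 ∂μ), ← integral_prod_mul,
      ← integral_const_mul]
    congr 1; ext p
    have : ⟪rot g p.1, ξ⟫ = ⟪p.1, (rot g).symm ξ⟫ := LinearIsometryEquiv.inner_map_eq_flip _ _ _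
    rw [mul_one, mul_one, ch_conj, neg_neg, ← ch_add, ← ch_add, inner_sub_left, inner_add_left, this]
    congr 1; ring
  have e2 : ∫ ξ, ig μ R g ζ ξ = ((∫ p : Pt d × Pt d, gau R (rot g p.1 + ζ - p.2) ∂(μ.prod μ) : ℝ) : ℂ) := by
    simp_rw [e1]
    rw [integral_integral_swap]
    · simp_rw [gauFT hR]
      rw [integral_complex_ofReal]
    · have h0 : Integrable (fun q : Pt d × (Pt d × Pt d) => (gh R q.1 : ℂ) * (1:ℂ))
          (volume.prod (μ.prod μ)) := ((gh_int hR).ofReal).mul_prod (integrable_const (1 : ℂ))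
      have hcc : Continuous (fun q : Pt d × (Pt d × Pt d) => ch ⟪rot g q.2.1 + ζ - q.2.2, q.1⟫) :=
        ch_cont.comp (by
          have := (rot g).continuous
          fun_prop)
      refine (h0.bdd_mul (c := 1) hcc.aestronglyMeasurable
        (ae_of_all _ fun q => (norm_ch _).le)).congr (ae_of_all _ fun q => ?_)
      simp [Function.uncurry]
  have hbd : ∀ v : Pt d, gau R v ≤ R ^ d := fun v => by
    unfold gau
    have : Real.exp (-(π * R ^ 2 * ‖v‖ ^ 2)) ≤ 1 := by
      rw [Real.exp_le_one_iff]; simp; positivity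
    calc _ ≤ R ^ d * 1 := by gcongr
      _ = _ := mul_one _
  have hi : Integrable (fun p : Pt d × Pt d => gau R (rot g p.1 + ζ - p.2)) (μ.prod μ) :=
    Integrable.of_bound hc.aestronglyMeasurable (R ^ d) (ae_of_all _ fun p => by
      rw [Real.norm_of_nonneg (gau_nonneg hR _)]; exact hbd _)
  rw [e2, ← ofReal_norm, Complex.norm_of_nonneg (integral_nonneg fun p => gau_nonneg hR _),
    ofReal_integral_eq_lintegral_ofReal hi (ae_of_all _ fun p => gau_nonneg hR _)]
  rfl

/-- dyadic annuli -/
def An (d : ℕ) : ℕ → Set (Pt d) := disjointed fun j : ℕ => ball (0 : Pt d) (2 ^ j)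

lemma An_zero : An d 0 = ball 0 1 := by unfold An; rw [disjointed_zero]; simp

lemma ball_mono : Monotone (fun j : ℕ => ball (0 : Pt d) (2 ^ j)) := by
  intro i j hij
  exact ball_subset_ball (pow_le_pow_right₀ (by norm_num) hij)

lemma An_succ (j : ℕ) : An d (j + 1) = ball 0 (2 ^ (j + 1)) \ ball 0 (2 ^ j) := by
  unfold An; exact ball_mono.disjointed_add_one j

lemma An_sub (j : ℕ) : An d j ⊆ ball 0 (2 ^ j) := disjointed_subset _ _

lemma An_meas (j : ℕ) : MeasurableSet (An d j) := by
  cases j with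
  | zero => rw [An_zero]; exact measurableSet_ball
  | succ j => rw [An_succ]; exact measurableSet_ball.diff measurableSet_ball

lemma An_union : ⋃ j, An d j = univ := by
  unfold An
  rw [iUnion_disjointed]
  refine eq_univ_of_forall fun x => mem_iUnion.2 ?_
  obtain ⟨n, hn⟩ := pow_unbounded_of_one_lt ‖x‖ (by norm_num : (1:ℝ) < 2)
  exact ⟨n, by simpa using hn⟩

lemma An_rot (g : G d) (j : ℕ) (x : Pt d) : (rot g).symm x ∈ An d j ↔ x ∈ An d j := by
  cases j with
  | zero => rw [An_zero]; simp
  | succ j => rw [An_succ]; simp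

/-- dyadic pieces -/
def nu (μ : Measure (Pt d)) (R : ℝ) (j : ℕ) (g : G d) (ζ : Pt d) : ℂ :=
  ∫ ξ in An d j, ig μ R g ζ ξ

lemma N_le {R : ℝ} (hR : 0 < R) (g : G d) (ζ : Pt d) :
    N μ R g ζ ≤ ∑' j, ‖nu μ R j g ζ‖ₑ := by
  rw [N_eq hR]
  have h := integral_iUnion (f := ig μ R g ζ) (μ := volume) (An_meas (d := d))
    (disjoint_disjointed _) (ig_int hR g ζ).integrableOn
  rw [An_union, setIntegral_univ] at h
  rw [h]
  exact enorm_tsum_le_tsum_enorm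

lemma nu_cont {R : ℝ} (hR : 0 < R) (j : ℕ) : Continuous (fun p : G d × Pt d => nu μ R j p.1 p.2) := by
  unfold nu
  refine continuous_of_dominated (bound := gh R) ?_ ?_ (gh_int hR).integrableOn ?_
  · intro p; exact (ig_cont1 R p.1 p.2).aestronglyMeasurable
  · intro p; exact ae_of_all _ (ig_le R p.1 p.2)
  · refine ae_of_all _ fun ξ => ?_
    exact (ig_cont R).comp (f := fun p : G d × Pt d => (p, ξ)) (by fun_prop)

/-- square of the transform -/
def P (μ : Measure (Pt d)) (ξ : Pt d) : ℝ≥0∞ := ‖F μ (fun _ => 1) ξ‖ₑ ^ 2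

lemma cc_sq (g : G d) (ξ : Pt d) : ‖cc μ g ξ‖ₑ ^ 2 = P μ ξ * P μ ((rot g).symm ξ) := by
  unfold cc P
  rw [enorm_mul, mul_pow]
  congr 2
  simp [← ofReal_norm]

lemma cc_two (g : G d) (ξ : Pt d) : 2 * ‖cc μ g ξ‖ₑ ≤ P μ ξ + P μ ((rot g).symm ξ) := by
  unfold cc P
  rw [enorm_mul]
  refine le_trans (le_of_eq ?_) (two_mul_le_sq _ _)
  congr 2
  simp [← ofReal_norm]

lemma ig_enorm_le (R : ℝ) (g : G d) (ζ ξ : Pt d) : ‖ig μ R g ζ ξ‖ₑ ≤ ‖cc μ g ξ‖ₑ := by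
  unfold ig
  rw [← ofReal_norm, ← ofReal_norm]
  refine ENNReal.ofReal_le_ofReal ?_
  rw [norm_mul, norm_ch, one_mul, norm_mul, Complex.norm_of_nonneg (gh_pos R ξ).le]
  calc _ ≤ ‖cc μ g ξ‖ * 1 := by gcongr; exact gh_le R ξ
    _ = _ := mul_one _

lemma P_meas : Measurable (P μ) := one_meas

lemma nu_sup (R : ℝ) (j : ℕ) (g : G d) (ζ : Pt d) :
    ‖nu μ R j g ζ‖ₑ ≤ ∫⁻ ξ in An d j, P μ ξ := by
  have hrot : ∫⁻ ξ in An d j, P μ ((rot g).symm ξ) = ∫⁻ ξ in An d j, P μ ξ := by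
    rw [← lintegral_indicator (An_meas j), ← lintegral_indicator (An_meas j),
      ← (rot g).symm.measurePreserving.lintegral_comp (P_meas.indicator (An_meas j))]
    refine lintegral_congr fun x => ?_
    by_cases hx : x ∈ An d j
    · rw [indicator_of_mem hx, indicator_of_mem ((An_rot g j x).2 hx)]
    · rw [indicator_of_notMem hx, indicator_of_notMem (fun h => hx ((An_rot g j x).1 h))]
  have h2 : 2 * ‖nu μ R j g ζ‖ₑ ≤ 2 * ∫⁻ ξ in An d j, P μ ξ := by
    calc _ ≤ 2 * ∫⁻ ξ in An d j, ‖cc μ g ξ‖ₑ := by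
          gcongr
          exact (enorm_integral_le_lintegral_enorm _).trans (lintegral_mono fun ξ => ig_enorm_le R g ζ ξ)
      _ = ∫⁻ ξ in An d j, 2 * ‖cc μ g ξ‖ₑ := (lintegral_const_mul' _ _ (by simp)).symm
      _ ≤ ∫⁻ ξ in An d j, (P μ ξ + P μ ((rot g).symm ξ)) := lintegral_mono fun ξ => cc_two g ξ
      _ = _ := by rw [lintegral_add_left P_meas, hrot, two_mul]
  exact (ENNReal.mul_le_mul_iff_right (by simp) (by simp)).1 h2

lemma nu_L2 {R : ℝ} (hR : 0 < R) (j : ℕ) (g : G d) :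
    ∫⁻ ζ, ‖nu μ R j g ζ‖ₑ ^ 2 ≤ ∫⁻ ξ in An d j, P μ ξ * P μ ((rot g).symm ξ) := by
  set b : Pt d → ℂ := (An d j).indicator (fun ξ => cc μ g ξ * (gh R ξ : ℂ)) with hb
  have hccg : Continuous (fun ξ => cc μ g ξ * (gh R ξ : ℂ)) :=
    (cc_cont.comp (f := fun ξ : Pt d => (g, ξ)) (by fun_prop)).mul
      (Complex.continuous_ofReal.comp (gh_cont R))
  have hn : ∀ ξ, ‖cc μ g ξ * (gh R ξ : ℂ)‖ ≤ gh R ξ := fun ξ => by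
    rw [norm_mul, Complex.norm_of_nonneg (gh_pos R ξ).le]
    calc _ ≤ 1 * gh R ξ := by gcongr; exacts [(gh_pos R ξ).le, cc_le g ξ]
      _ = _ := one_mul _
  have hbi : Integrable b :=
    ((gh_int hR).mono' hccg.aestronglyMeasurable (ae_of_all _ hn)).indicator (An_meas j)
  have e1 : ∀ ζ, nu μ R j g ζ = F volume b (-ζ) := by
    intro ζ
    unfold nu F ig
    rw [← integral_indicator (An_meas j)]
    congr 1; ext ξ
    rw [inner_neg_right, neg_neg, hb]
    by_cases hx : ξ ∈ An d j
    · rw [indicator_of_mem hx, indicator_of_mem hx, real_inner_comm]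
    · rw [indicator_of_notMem hx, indicator_of_notMem hx, mul_zero]
  simp_rw [e1]
  have e2 : ∫⁻ ζ : Pt d, ‖F volume b (-ζ)‖ₑ ^ 2 = ∫⁻ ζ : Pt d, ‖F volume b ζ‖ₑ ^ 2 :=
    lintegral_neg_eq_self (μ := volume) (fun ζ : Pt d => ‖F volume b ζ‖ₑ ^ 2)
  rw [e2]
  refine (bessel hbi).trans ?_
  rw [← lintegral_indicator (An_meas j)]
  refine lintegral_mono fun ξ => ?_
  rw [hb]
  by_cases hx : ξ ∈ An d j
  · rw [indicator_of_mem hx, indicator_of_mem hx, ← cc_sq]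
    gcongr
    rw [← ofReal_norm, ← ofReal_norm]
    refine ENNReal.ofReal_le_ofReal ?_
    rw [norm_mul, Complex.norm_of_nonneg (gh_pos R ξ).le]
    calc _ ≤ ‖cc μ g ξ‖ * 1 := by gcongr; exact gh_le R ξ
      _ = _ := mul_one _
  · rw [indicator_of_notMem hx, indicator_of_notMem hx]; simp

lemma nu_L2_avg {R : ℝ} (hR : 0 < R) (j : ℕ) :
    ∫⁻ g : G d, ∫⁻ ζ, ‖nu μ R j g ζ‖ₑ ^ 2 ∂volume ∂θ ≤ ∫⁻ ξ in An d j, P μ ξ * avg (P μ) ξ := by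
  calc _ ≤ ∫⁻ g : G d, ∫⁻ ξ in An d j, P μ ξ * P μ ((rot g).symm ξ) ∂volume ∂θ :=
        lintegral_mono fun g => nu_L2 hR j g
    _ = ∫⁻ ξ in An d j, ∫⁻ g : G d, P μ ξ * P μ ((rot g).symm ξ) ∂θ := by
        rw [lintegral_lintegral_swap]
        refine Measurable.aemeasurable ?_
        exact (P_meas.comp measurable_snd).mul (P_meas.comp rot_symm_cont.measurable)
    _ = _ := by
        refine lintegral_congr fun ξ => ?_
        unfold avg
        rw [lintegral_const_mul' _ _ (by unfold P; simp)]

end Fou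

namespace Fou
open Complex (I)
open scoped Real RealInnerProductSpace
open Ort
variable {d : ℕ} {μ : Measure (Pt d)} [IsProbabilityMeasure μ]

lemma two_pow_rpow (j : ℕ) (x : ℝ) : ((2:ℝ) ^ j) ^ x = ((2:ℝ) ^ x) ^ j := by
  rw [← Real.rpow_natCast, ← Real.rpow_mul (by norm_num), ← Real.rpow_natCast,
    ← Real.rpow_mul (by norm_num), mul_comm]

lemma avg_one_le (ξ : Pt d) : avg (P μ) ξ ≤ 1 := by
  unfold avg
  calc _ ≤ ∫⁻ g : G d, 1 ∂θ := by
        refine lintegral_mono fun g => ?_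
        unfold P
        rw [← ofReal_norm]
        refine pow_le_one₀ zero_le ?_
        rw [← ENNReal.ofReal_one]
        exact ENNReal.ofReal_le_ofReal (F_one_le _)
    _ = 1 := by simp

lemma P_An {C s : ℝ} (hC : 0 < C) (hs : 0 ≤ s) (hsd : s ≤ d) (h : Fr μ C s) :
    ∃ C1 : ℝ, 0 < C1 ∧ ∀ j, ∫⁻ ξ in An d j, P μ ξ ≤
      ENNReal.ofReal (C1 * ((2:ℝ) ^ ((d : ℝ) - s)) ^ j) := by
  obtain ⟨C', hC', he⟩ := energy hC hs hsd h
  refine ⟨C', hC', fun j => ?_⟩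
  have := he 1 zero_le_one (fun _ => 1) aestronglyMeasurable_const (by simp) (2 ^ j) (by positivity)
  rw [two_pow_rpow, one_pow, mul_one] at this
  refine le_trans (lintegral_mono_set ?_) this
  exact (An_sub j).trans ball_subset_closedBall

lemma avg_An {C s M : ℝ} (hd : 0 < d) (hC : 0 < C) (hs : 1 ≤ s) (hsd : s ≤ d) (h : Fr μ C s)
    (hM0 : 0 ≤ M) (hM : ∀ᵐ x ∂μ, ‖x‖ ≤ M) : ∃ C2 : ℝ, 0 < C2 ∧ ∀ j, ∀ ξ ∈ An d j,
      avg (P μ) ξ ≤ ENNReal.ofReal (C2 * ((2:ℝ) ^ (1 - s)) ^ j) := by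
  obtain ⟨C', hC', he⟩ := spherical hd hC (by linarith) hsd h hM0 hM
  refine ⟨max 1 (C' * (2:ℝ) ^ (s - 1)), by positivity, fun j ξ hξ => ?_⟩
  cases j with
  | zero =>
    refine (avg_one_le ξ).trans ?_
    rw [pow_zero, mul_one, ← ENNReal.ofReal_one]
    exact ENNReal.ofReal_le_ofReal (le_max_left _ _)
  | succ j =>
    rw [An_succ] at hξ
    have h2 : (2:ℝ) ^ j ≤ ‖ξ‖ := by
      have := hξ.2
      simpa using this
    have h1 : 1 ≤ ‖ξ‖ := le_trans (one_le_pow₀ (by norm_num)) h2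
    refine (he ξ h1).trans (ENNReal.ofReal_le_ofReal ?_)
    calc C' * ‖ξ‖ ^ (1 - s) ≤ C' * ((2:ℝ) ^ j) ^ (1 - s) := by
          gcongr C' * ?_
          exact Real.rpow_le_rpow_of_nonpos (by positivity) h2 (by linarith)
      _ = C' * (2:ℝ) ^ (s - 1) * ((2:ℝ) ^ (1 - s)) ^ (j + 1) := by
          rw [two_pow_rpow, pow_succ]
          have : (2:ℝ) ^ (s - 1) * (2:ℝ) ^ (1 - s) = 1 := by
            rw [← Real.rpow_add (by norm_num)]; simp
          linear_combination (-(C' * ((2:ℝ) ^ (1 - s)) ^ j)) * this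
      _ ≤ _ := by gcongr; exact le_max_right _ _

lemma nu_pow {C s M : ℝ} (hd : 0 < d) (hC : 0 < C) (hs : 1 ≤ s) (hsd : s ≤ d) (h : Fr μ C s)
    (hM0 : 0 ≤ M) (hM : ∀ᵐ x ∂μ, ‖x‖ ≤ M) (k : ℕ) : ∃ C3 : ℝ, 0 < C3 ∧ ∀ R > 0, ∀ j,
      ∫⁻ g : G d, ∫⁻ ζ, ‖nu μ R j g ζ‖ₑ ^ (k + 2) ∂volume ∂θ ≤
        ENNReal.ofReal (C3 * ((2:ℝ) ^ ((k + 1 : ℝ) * (d - s) + (1 - s))) ^ j) := by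
  obtain ⟨C1, hC1, h1⟩ := P_An hC (by linarith) hsd h
  obtain ⟨C2, hC2, h2⟩ := avg_An hd hC hs hsd h hM0 hM
  refine ⟨C1 ^ k * (C2 * C1), by positivity, fun R hR j => ?_⟩
  set β := (2:ℝ) ^ ((d : ℝ) - s)
  set τ := (2:ℝ) ^ (1 - s)
  have hβ : 0 < β := by positivity
  have hτ : 0 < τ := by positivity
  have hρ : (2:ℝ) ^ ((k + 1 : ℝ) * (d - s) + (1 - s)) = β ^ (k + 1) * τ := by
    rw [Real.rpow_add (by norm_num), mul_comm (k + 1 : ℝ), Real.rpow_mul (by norm_num)]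
    rw [show (k + 1 : ℝ) = ((k + 1 : ℕ) : ℝ) by push_cast; rfl, Real.rpow_natCast]
  have hL2 : ∫⁻ g : G d, ∫⁻ ζ, ‖nu μ R j g ζ‖ₑ ^ 2 ∂volume ∂θ ≤
      ENNReal.ofReal (C2 * τ ^ j) * ENNReal.ofReal (C1 * β ^ j) := by
    refine (nu_L2_avg hR j).trans ?_
    calc _ ≤ ∫⁻ ξ in An d j, ENNReal.ofReal (C2 * τ ^ j) * P μ ξ := by
          refine setLIntegral_mono' (An_meas j) fun ξ hξ => ?_
          rw [mul_comm]
          gcongr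
          exact h2 j ξ hξ
      _ ≤ _ := by
          rw [lintegral_const_mul' _ _ ENNReal.ofReal_ne_top]
          gcongr
          exact h1 j
  calc _ ≤ ∫⁻ g : G d, ∫⁻ ζ, ENNReal.ofReal (C1 * β ^ j) ^ k * ‖nu μ R j g ζ‖ₑ ^ 2 ∂volume ∂θ := by
        refine lintegral_mono fun g => lintegral_mono fun ζ => ?_
        rw [pow_add]
        gcongr
        exact (nu_sup R j g ζ).trans (h1 j)
    _ = ENNReal.ofReal (C1 * β ^ j) ^ k * ∫⁻ g : G d, ∫⁻ ζ, ‖nu μ R j g ζ‖ₑ ^ 2 ∂volume ∂θ := by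
        rw [← lintegral_const_mul' _ _ (by simp)]
        refine lintegral_congr fun g => ?_
        rw [lintegral_const_mul' _ _ (by simp)]
    _ ≤ ENNReal.ofReal (C1 * β ^ j) ^ k *
        (ENNReal.ofReal (C2 * τ ^ j) * ENNReal.ofReal (C1 * β ^ j)) := by gcongr
    _ = _ := by
        rw [← ENNReal.ofReal_pow (by positivity), ← ENNReal.ofReal_mul (by positivity),
          ← ENNReal.ofReal_mul (by positivity), hρ]
        congr 1
        ring

theorem J_bound {C s M : ℝ} (hd : 0 < d) (hC : 0 < C) (hs : 1 ≤ s) (hsd : s ≤ d) (h : Fr μ C s)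
    (hM0 : 0 ≤ M) (hM : ∀ᵐ x ∂μ, ‖x‖ ≤ M) (k : ℕ) (hks : ((k + 1 : ℝ) * d + 1) < (k + 2) * s) :
    ∃ K : ℝ≥0∞, K ≠ ⊤ ∧ ∀ R > 0, ∫⁻ g : G d, ∫⁻ ζ, N μ R g ζ ^ (k + 2) ∂volume ∂θ ≤ K := by
  obtain ⟨C3, hC3, h3⟩ := nu_pow hd hC hs hsd h hM0 hM k
  set ρ := (2:ℝ) ^ ((k + 1 : ℝ) * (d - s) + (1 - s)) with hρ
  have hρ0 : 0 < ρ := by positivity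
  have hρ1 : ρ < 1 := by
    apply Real.rpow_lt_one_of_one_lt_of_neg (by norm_num)
    nlinarith
  set b := ρ ^ ((1:ℝ) / (2 * (k + 2))) with hb
  have hb0 : 0 < b := by positivity
  have hb1 : b < 1 := Real.rpow_lt_one hρ0.le hρ1 (by positivity)
  set c := ρ ^ ((1:ℝ) / 2) with hc
  have hc0 : 0 < c := by positivity
  have hc1 : c < 1 := Real.rpow_lt_one hρ0.le hρ1 (by positivity)
  have hbc : b ^ (k + 2) = c := by
    rw [hb, ← Real.rpow_natCast, ← Real.rpow_mul hρ0.le, hc]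
    congr 1; push_cast; field_simp
  have hcc : ρ = c * c := by
    rw [hc, ← Real.rpow_add hρ0]; norm_num
  set a : ℕ → ℝ≥0∞ := fun j => ENNReal.ofReal (b ^ j) with ha
  have ha0 : ∀ j, a j ≠ 0 := fun j => (ENNReal.ofReal_pos.2 (by positivity)).ne'
  have hat : ∀ j, a j ≠ ⊤ := fun j => ENNReal.ofReal_ne_top
  have hsa : (∑' j, a j) ≠ ⊤ := by
    rw [ha, ← ENNReal.ofReal_tsum_of_nonneg (fun j => by positivity)
      (summable_geometric_of_lt_one hb0.le hb1)]
    exact ENNReal.ofReal_ne_top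
  refine ⟨(∑' j, a j) ^ (k + 2) * ∑' j : ℕ, ENNReal.ofReal (C3 * c ^ j), ?_, fun R hR => ?_⟩
  · refine ENNReal.mul_ne_top (ENNReal.pow_ne_top hsa) ?_
    rw [← ENNReal.ofReal_tsum_of_nonneg (fun j => by positivity)
      ((summable_geometric_of_lt_one hc0.le hc1).mul_left _)]
    exact ENNReal.ofReal_ne_top
  have hm : ∀ j, Measurable (fun p : G d × Pt d => (‖nu μ R j p.1 p.2‖ₑ / a j) ^ (k + 2)) := fun j =>
    ((nu_cont hR j).enorm.measurable.div_const _).pow_const _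
  have hm2 : ∀ j (g : G d), Measurable (fun ζ : Pt d => (‖nu μ R j g ζ‖ₑ / a j) ^ (k + 2)) :=
    fun j g => ((((nu_cont hR j).comp (f := fun ζ : Pt d => (g, ζ)) (by fun_prop)).enorm).measurable.div_const
      _).pow_const _
  have hm1 : ∀ j, Measurable (fun g : G d => ∫⁻ ζ : Pt d, (‖nu μ R j g ζ‖ₑ / a j) ^ (k + 2)) :=
    fun j => Measurable.lintegral_prod_right' (hm j)
  calc _ ≤ ∫⁻ g : G d, ∫⁻ ζ, (∑' j, a j) ^ (k + 2) * ∑' j, (‖nu μ R j g ζ‖ₑ / a j) ^ (k + 2)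
        ∂volume ∂θ := by
        refine lintegral_mono fun g => lintegral_mono fun ζ => ?_
        refine le_trans ?_ (sum_pow_le (by omega) _ a ha0 hat)
        gcongr
        exact N_le hR g ζ
    _ = (∑' j, a j) ^ (k + 2) * ∑' j, ∫⁻ g : G d, ∫⁻ ζ, (‖nu μ R j g ζ‖ₑ / a j) ^ (k + 2)
        ∂volume ∂θ := by
        rw [← lintegral_tsum fun j => (hm1 j).aemeasurable,
          ← lintegral_const_mul' _ _ (ENNReal.pow_ne_top hsa)]
        refine lintegral_congr fun g => ?_
        rw [← lintegral_tsum fun j => (hm2 j g).aemeasurable,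
          ← lintegral_const_mul' _ _ (ENNReal.pow_ne_top hsa)]
    _ ≤ _ := by
        gcongr with j
        calc _ = (a j)⁻¹ ^ (k + 2) * ∫⁻ g : G d, ∫⁻ ζ, ‖nu μ R j g ζ‖ₑ ^ (k + 2) ∂volume ∂θ := by
              have hai : (a j)⁻¹ ^ (k + 2) ≠ ⊤ := ENNReal.pow_ne_top (ENNReal.inv_ne_top.2 (ha0 j))
              rw [← lintegral_const_mul' _ _ hai]
              refine lintegral_congr fun g => ?_
              rw [← lintegral_const_mul' _ _ hai]
              refine lintegral_congr fun ζ => ?_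
              rw [div_eq_mul_inv, mul_pow, mul_comm]
          _ ≤ (a j)⁻¹ ^ (k + 2) * ENNReal.ofReal (C3 * ρ ^ j) := by gcongr; exact h3 R hR j
          _ = _ := by
              rw [ha, ← ENNReal.ofReal_inv_of_pos (by positivity), ← ENNReal.ofReal_pow (by positivity),
                ← ENNReal.ofReal_mul (by positivity)]
              congr 1
              rw [inv_pow, ← pow_mul, mul_comm j, pow_mul, hbc, hcc, mul_pow]
              field_simp

end Fou

/-! ### Nondegenerate tuples in the support -/
namespace Ndg
open Fou
variable {d : ℕ}

lemma Fr_singleton {μ : Measure (Pt d)} {C s : ℝ} (hs : 0 < s) (h : Fr μ C s) (x : Pt d) :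
    μ {x} = 0 := by
  have hlim : Filter.Tendsto (fun n : ℕ => ENNReal.ofReal (C * (1 / ((n : ℝ) + 1)) ^ s)) Filter.atTop
      (𝓝 0) := by
    have h1 := (tendsto_one_div_add_atTop_nhds_zero_nat (𝕜 := ℝ)).rpow_const (p := s) (Or.inr hs.le)
    rw [Real.zero_rpow hs.ne'] at h1
    have := ENNReal.tendsto_ofReal (h1.const_mul C)
    simpa using this
  refine le_antisymm (ge_of_tendsto' hlim fun n => ?_) zero_le
  refine (measure_mono ?_).trans (h x (1 / ((n : ℝ) + 1)) (by positivity))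
  simp only [singleton_subset_iff]
  exact mem_closedBall_self (by positivity)

lemma Fr_le {μ : Measure (Pt d)} {C s : ℝ} (hC : 0 < C) (hs : 0 < s) (h : Fr μ C s) :
    (ENNReal.ofReal C)⁻¹ • μ ≤ μH[s] := by
  have hC0 : ENNReal.ofReal C ≠ 0 := (ENNReal.ofReal_pos.2 hC).ne'
  refine Measure.le_hausdorffMeasure s _ 1 one_pos fun A hA => ?_
  rw [Measure.smul_apply, smul_eq_mul]
  rcases A.eq_empty_or_nonempty with rfl | ⟨x, hx⟩
  · simp
  have ht : ediam A ≠ ⊤ := ne_top_of_le_ne_top ENNReal.one_ne_top hA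
  by_cases h0 : ediam A = 0
  · have : A ⊆ {x} := by
      intro y hy
      have := edist_le_ediam_of_mem hy hx
      rw [h0] at this
      simpa using this
    have : μ A = 0 := measure_mono_null this (Fr_singleton hs h x)
    rw [this, mul_zero]; exact zero_le
  · have hr : 0 < (ediam A).toReal := ENNReal.toReal_pos h0 ht
    have hsub : A ⊆ closedBall x (ediam A).toReal := by
      intro y hy
      rw [mem_closedBall, dist_edist]
      exact ENNReal.toReal_mono ht (edist_le_ediam_of_mem hy hx)
    have := (measure_mono hsub).trans (h x _ hr)
    rw [ENNReal.ofReal_mul hC.le, ← ENNReal.ofReal_rpow_of_pos hr, ENNReal.ofReal_toReal ht] at this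
    calc _ ≤ (ENNReal.ofReal C)⁻¹ * (ENNReal.ofReal C * ediam A ^ s) := by gcongr
      _ = _ := by rw [← mul_assoc, ENNReal.inv_mul_cancel hC0 ENNReal.ofReal_ne_top, one_mul]

lemma Fr_null {μ : Measure (Pt d)} {C s : ℝ} (hC : 0 < C) (hs : 0 < s) (h : Fr μ C s)
    {A : Set (Pt d)} (hA : dimH A < ENNReal.ofReal s) : μ A = 0 := by
  have h1 : μH[s] A = 0 := by
    have := hausdorffMeasure_of_dimH_lt (d := s.toNNReal) (s := A) (by exact_mod_cast hA)
    rwa [Real.coe_toNNReal _ hs.le] at this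
  have h2 := Fr_le hC hs h A
  rw [h1, Measure.smul_apply, smul_eq_mul, nonpos_iff_eq_zero, mul_eq_zero] at h2
  rcases h2 with h2 | h2
  · simp at h2
  · exact h2

lemma exists_nondeg (k : ℕ) {μ : Measure (Pt d)} [IsProbabilityMeasure μ] {C s : ℝ} (hC : 0 < C)
    (hs : 0 < s) (h : Fr μ C s) (hks : (k : ℝ) < s + 1) :
    ∃ x : Fin (k + 1) → Pt d, Nondeg d k x ∧ ∀ i, x i ∈ μ.support := by
  have hc : μ μ.supportᶜ = 0 := Measure.measure_compl_support
  have hne : μ.support.Nonempty := by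
    by_contra hcon
    rw [not_nonempty_iff_eq_empty] at hcon
    rw [hcon] at hc
    simp at hc
  obtain ⟨x0, hx0⟩ := hne
  set S := (fun x => x - x0) '' μ.support with hS
  have hrank : k ≤ Module.finrank ℝ (Submodule.span ℝ S) := by
    by_contra hcon
    push Not at hcon
    set V := Submodule.span ℝ S
    have hsub : μ.support ⊆ range (fun v : V => (v : Pt d) + x0) := by
      intro x hx
      exact ⟨⟨x - x0, Submodule.subset_span ⟨x, hx, rfl⟩⟩, by simp⟩
    have hiso : Isometry (fun v : V => (v : Pt d) + x0) :=
      (IsometryEquiv.addRight x0).isometry.comp isometry_subtype_coe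
    have hdim : dimH (range (fun v : V => (v : Pt d) + x0)) = (Module.finrank ℝ V : ℝ≥0∞) := by
      rw [← image_univ, hiso.dimH_image, Real.dimH_univ_eq_finrank]
    have hlt : dimH (range (fun v : V => (v : Pt d) + x0)) < ENNReal.ofReal s := by
      rw [hdim, ← ENNReal.ofReal_natCast]
      refine (ENNReal.ofReal_lt_ofReal_iff hs).2 ?_
      have : ((Module.finrank ℝ V + 1 : ℕ) : ℝ) ≤ k := by exact_mod_cast hcon
      push_cast at this
      linarith
    have h0 : μ μ.support = 0 := measure_mono_null hsub (Fr_null hC hs h hlt)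
    have : μ univ = 0 := by
      rw [← union_compl_self μ.support]
      exact measure_union_null h0 hc
    simp at this
  obtain ⟨b, hbS, hbspan, hbli⟩ := exists_linearIndependent ℝ S
  have hfin : b.Finite := hbli.setFinite
  have : Fintype b := hfin.fintype
  have hcard : Module.finrank ℝ (Submodule.span ℝ S) = b.toFinset.card := by
    rw [← hbspan, finrank_span_set_eq_card hbli]
  rw [hcard, toFinset_card] at hrank
  obtain ⟨e⟩ : Nonempty (Fin k ↪ b) := by
    apply Function.Embedding.nonempty_of_card_le
    simpa using hrank
  refine ⟨Fin.cons x0 (fun i => (e i : Pt d) + x0), ?_, ?_⟩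
  · unfold Nondeg
    simp only [Fin.cons_succ, Fin.cons_zero, add_sub_cancel_right]
    exact hbli.comp e e.injective
  · intro i
    refine Fin.cases ?_ (fun i => ?_) i
    · simpa using hx0
    · simp only [Fin.cons_succ]
      obtain ⟨y, hy, hyx⟩ := hbS (e i).2
      rw [← hyx]; simpa using hy

lemma nondeg_isOpen (k : ℕ) : IsOpen {x : Fin (k + 1) → Pt d | Nondeg d k x} := by
  have h1 : IsOpen {v : Fin k → Pt d | LinearIndependent ℝ v} := isOpen_setOfPred_linearIndependent
  exact h1.preimage (f := fun (x : Fin (k + 1) → Pt d) (i : Fin k) => x i.succ - x 0) (by fun_prop)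

/-- compact sets of positive measure in the support forming nondegenerate tuples -/
lemma exists_sets (k : ℕ) {μ : Measure (Pt d)} [IsProbabilityMeasure μ] {C s : ℝ} (hC : 0 < C)
    (hs : 0 < s) (h : Fr μ C s) (hks : (k : ℝ) < s + 1) {E : Set (Pt d)} (hE : IsCompact E)
    (hμE : μ Eᶜ = 0) :
    ∃ K : Fin (k + 1) → Set (Pt d), (∀ i, IsCompact (K i)) ∧ (∀ i, K i ⊆ E) ∧ (∀ i, μ (K i) ≠ 0) ∧
      ∀ x : Fin (k + 1) → Pt d, (∀ i, x i ∈ K i) → Nondeg d k x := by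
  obtain ⟨x, hx, hxs⟩ := exists_nondeg k hC hs h hks
  obtain ⟨ε, hε, hball⟩ := Metric.isOpen_iff.1 (nondeg_isOpen (d := d) k) x hx
  refine ⟨fun i => closedBall (x i) (ε / 2) ∩ E, fun i => hE.inter_left isClosed_closedBall,
    fun i => inter_subset_right, fun i => ?_, fun y hy => ?_⟩
  · have hpos : 0 < μ (closedBall (x i) (ε / 2)) := by
      have := (Measure.mem_support_iff_forall _).1 (hxs i) _ (closedBall_mem_nhds (x i) (half_pos hε))
      exact this
    have : μ (closedBall (x i) (ε / 2) ∩ E) = μ (closedBall (x i) (ε / 2)) :=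
      measure_inter_conull hμE
    rw [this]; exact hpos.ne'
  · apply hball
    rw [mem_ball, dist_pi_lt_iff hε]
    intro i
    have := (hy i).1
    rw [mem_closedBall] at this
    linarith

end Ndg

namespace Asm
open Ort Fou
variable {d : ℕ}

/-- product integral -/
lemma lint_prod {X : Type*} [MeasureSpace X] [SigmaFinite (volume : Measure X)] :
    ∀ (n : ℕ) (h : Fin n → X → ℝ≥0∞), (∀ i, Measurable (h i)) →
    ∫⁻ w : Fin n → X, ∏ i, h i (w i) = ∏ i, ∫⁻ x, h i x := by
  intro n
  induction n with
  | zero =>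
    intro h _
    simp [volume_pi]
  | succ n ih =>
    intro h hm
    have e := (volume_preserving_piFinSuccAbove (fun _ : Fin (n + 1) => X) 0).symm
    have hmp : Measurable (fun w : Fin (n + 1) → X => ∏ i, h i (w i)) :=
      Finset.measurable_prod _ fun i _ => (hm i).comp (measurable_pi_apply i)
    have hmp' : Measurable (fun w : Fin n → X => ∏ i, h i.succ (w i)) :=
      Finset.measurable_prod _ fun i _ => (hm i.succ).comp (measurable_pi_apply i)
    rw [← e.lintegral_comp hmp]
    have h1 : ∀ p : X × (Fin n → X),
        ∏ i, h i ((MeasurableEquiv.piFinSuccAbove (fun _ : Fin (n + 1) => X) 0).symm p i)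
          = h 0 p.1 * ∏ i : Fin n, h i.succ (p.2 i) := by
      intro p
      rw [Fin.prod_univ_succ]
      simp [MeasurableEquiv.piFinSuccAbove]
    simp only [h1]
    rw [Measure.volume_eq_prod, lintegral_prod_mul (hm 0).aemeasurable
      hmp'.aemeasurable, ih _ (fun i => hm i.succ), Fin.prod_univ_succ]

/-- inverse rigid motion -/
def ac (ω : G d × Pt d) (x : Pt d) : Pt d := (rot ω.1).symm (x - ω.2)

lemma ac_cont : Continuous (fun p : (G d × Pt d) × Pt d => ac p.1 p.2) := by
  unfold ac
  exact rot_symm_cont.comp (f := fun p : (G d × Pt d) × Pt d => (p.1.1, p.2 - p.1.2)) (by fun_prop)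

lemma ac_meas (ω : G d × Pt d) : Measurable (ac ω) :=
  (ac_cont.comp (f := fun x : Pt d => (ω, x)) (by fun_prop)).measurable

lemma lint_ac (ω : G d × Pt d) {f : Pt d → ℝ≥0∞} (hf : Measurable f) :
    ∫⁻ x, f (ac ω x) = ∫⁻ x, f x := by
  unfold ac
  rw [lintegral_sub_right_eq_self (μ := volume) (fun x => f ((rot ω.1).symm x)) ω.2]
  exact (rot ω.1).symm.measurePreserving.lintegral_comp hf

/-- correlation -/
def Q (F : Pt d → ℝ≥0∞) (γ : G d) (ζ : Pt d) : ℝ≥0∞ := ∫⁻ v, F v * F (rot γ v + ζ)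

lemma corr (F : Pt d → ℝ≥0∞) (hF : Measurable F) (ω ω' : G d × Pt d) :
    ∫⁻ x, F (ac ω x) * F (ac ω' x) = Q F (ω'.1⁻¹ * ω.1) ((rot ω'.1).symm (ω.2 - ω'.2)) := by
  have hm : Measurable (fun v => F v * F (rot (ω'.1⁻¹ * ω.1) v + (rot ω'.1).symm (ω.2 - ω'.2))) := by
    refine hF.mul (hF.comp ?_)
    exact ((rot (ω'.1⁻¹ * ω.1)).continuous.add continuous_const).measurable
  rw [Q, ← lint_ac ω hm]
  refine lintegral_congr fun x => ?_
  congr 2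
  rw [rot_mul, rot_inv]
  unfold ac
  rw [← map_add]
  simp

/-- the averaged product -/
def Φ {n : ℕ} (ν : Measure (G d × Pt d)) (f : Fin n → Pt d → ℝ≥0∞) (w : Fin n → Pt d) : ℝ≥0∞ :=
  ∫⁻ ω, ∏ i, f i (ac ω (w i)) ∂ν

lemma prod_meas {n : ℕ} {f : Fin n → Pt d → ℝ≥0∞} (hf : ∀ i, Measurable (f i)) :
    Measurable (fun p : (Fin n → Pt d) × (G d × Pt d) => ∏ i, f i (ac p.2 (p.1 i))) := by
  refine Finset.measurable_prod _ fun i _ => (hf i).comp ?_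
  exact (ac_cont.comp (f := fun p : (Fin n → Pt d) × (G d × Pt d) => (p.2, p.1 i))
    (by fun_prop)).measurable

lemma prod_meas1 {n : ℕ} {f : Fin n → Pt d → ℝ≥0∞} (hf : ∀ i, Measurable (f i)) (w : Fin n → Pt d) :
    Measurable (fun ω : G d × Pt d => ∏ i, f i (ac ω (w i))) := by
  refine Finset.measurable_prod _ fun i _ => (hf i).comp ?_
  exact (ac_cont.comp (f := fun p : (G d × Pt d) => (p, w i)) (by fun_prop)).measurable

lemma Φ_meas {n : ℕ} (ν : Measure (G d × Pt d)) [SFinite ν] {f : Fin n → Pt d → ℝ≥0∞}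
    (hf : ∀ i, Measurable (f i)) : Measurable (Φ ν f) :=
  Measurable.lintegral_prod_right' (prod_meas hf)

lemma Φ_int {n : ℕ} (ν : Measure (G d × Pt d)) [SFinite ν] {f : Fin n → Pt d → ℝ≥0∞}
    (hf : ∀ i, Measurable (f i)) : ∫⁻ w, Φ ν f w = (∏ i, ∫⁻ x, f i x) * ν univ := by
  unfold Φ
  rw [lintegral_lintegral_swap (prod_meas hf).aemeasurable]
  have : ∀ ω : G d × Pt d, ∫⁻ w : Fin n → Pt d, ∏ i, f i (ac ω (w i)) = ∏ i, ∫⁻ x, f i x := by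
    intro ω
    rw [lint_prod n (fun i x => f i (ac ω x)) (fun i => (hf i).comp (ac_meas ω))]
    simp only [lint_ac ω (hf _)]
  simp [this]

lemma Φ_sq {n : ℕ} (ν : Measure (G d × Pt d)) [SFinite ν] {f : Fin n → Pt d → ℝ≥0∞}
    (hf : ∀ i, Measurable (f i)) {F : Pt d → ℝ≥0∞} (hF : Measurable F) (hfF : ∀ i x, f i x ≤ F x) :
    ∫⁻ w, Φ ν f w ^ 2 ≤
      ∫⁻ ω', ∫⁻ ω, Q F (ω'.1⁻¹ * ω.1) ((rot ω'.1).symm (ω.2 - ω'.2)) ^ n ∂ν ∂ν := by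
  have hm1 : ∀ w : Fin n → Pt d, Measurable (fun ω : G d × Pt d => ∏ i, f i (ac ω (w i))) := prod_meas1 hf
  have h1 : ∀ w, Φ ν f w ^ 2 = ∫⁻ ω', ∫⁻ ω, (∏ i, f i (ac ω (w i))) * ∏ i, f i (ac ω' (w i)) ∂ν ∂ν := by
    intro w
    have : ∀ ω', ∫⁻ ω, (∏ i, f i (ac ω (w i))) * ∏ i, f i (ac ω' (w i)) ∂ν
        = Φ ν f w * ∏ i, f i (ac ω' (w i)) := fun ω' => lintegral_mul_const _ (hm1 w)
    simp only [this]
    rw [lintegral_const_mul _ (hm1 w), sq]; rfl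
  simp only [h1]
  have hm3 : Measurable (fun p : ((Fin n → Pt d) × (G d × Pt d)) × (G d × Pt d) =>
      (∏ i, f i (ac p.2 (p.1.1 i))) * ∏ i, f i (ac p.1.2 (p.1.1 i))) := by
    refine Measurable.mul ?_ ?_
    · exact (prod_meas hf).comp (f := fun p : ((Fin n → Pt d) × (G d × Pt d)) × (G d × Pt d) =>
        (p.1.1, p.2)) (by fun_prop)
    · exact (prod_meas hf).comp measurable_fst
  rw [lintegral_lintegral_swap]
  · refine lintegral_mono fun ω' => ?_
    dsimp only
    rw [lintegral_lintegral_swap]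
    · refine lintegral_mono fun ω => ?_
      dsimp only
      simp only [← Finset.prod_mul_distrib]
      rw [lint_prod n (fun i x => f i (ac ω x) * f i (ac ω' x))
        (fun i => ((hf i).comp (ac_meas ω)).mul ((hf i).comp (ac_meas ω')))]
      rw [← corr F hF]
      calc _ ≤ ∏ i : Fin n, ∫⁻ x, F (ac ω x) * F (ac ω' x) := by
            refine Finset.prod_le_prod' fun i _ => lintegral_mono fun x => ?_
            exact mul_le_mul' (hfF i _) (hfF i _)
        _ = _ := by simp
    · exact (hm3.comp (f := fun p : (G d × Pt d) × (Fin n → Pt d) => ((p.2, ω'), p.1))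
        (by fun_prop)).comp measurable_swap |>.aemeasurable
  · exact (Measurable.lintegral_prod_right' hm3).aemeasurable

lemma Q_meas {F : Pt d → ℝ≥0∞} (hF : Measurable F) :
    Measurable (fun p : G d × Pt d => Q F p.1 p.2) := by
  unfold Q
  refine Measurable.lintegral_prod_right' (f := fun p : (G d × Pt d) × Pt d =>
    F p.2 * F (rot p.1.1 p.2 + p.1.2)) ?_
  refine (hF.comp measurable_snd).mul (hF.comp ?_)
  have := rot_cont.comp (f := fun p : (G d × Pt d) × Pt d => (p.1.1, p.2)) (by fun_prop)
  exact (this.add (by fun_prop : Continuous fun p : (G d × Pt d) × Pt d => p.1.2)).measurable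

lemma inv_J {F : Pt d → ℝ≥0∞} (hF : Measurable F) (n : ℕ) (B : Set (Pt d)) :
    ∫⁻ ω' : G d × Pt d, ∫⁻ ω, Q F (ω'.1⁻¹ * ω.1) ((rot ω'.1).symm (ω.2 - ω'.2)) ^ n
        ∂(θ.prod (volume.restrict B)) ∂(θ.prod (volume.restrict B))
      ≤ (∫⁻ g : G d, ∫⁻ ζ, Q F g ζ ^ n ∂volume ∂θ) * volume B := by
  calc _ ≤ ∫⁻ ω' : G d × Pt d, (∫⁻ g : G d, ∫⁻ ζ, Q F g ζ ^ n ∂volume ∂θ)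
        ∂(θ.prod (volume.restrict B)) := by
        refine lintegral_mono fun ω' => ?_
        have hm : Measurable (fun p : G d × Pt d => Q F p.1 p.2 ^ n) := (Q_meas hF).pow_const n
        have hm' : ∀ g : G d, Measurable (fun ζ : Pt d => Q F g ζ ^ n) := fun g =>
          hm.comp (g := fun p : G d × Pt d => Q F p.1 p.2 ^ n) (f := fun ζ : Pt d => (g, ζ)) (by fun_prop)
        dsimp only
        rw [lintegral_prod]
        · calc _ ≤ ∫⁻ g : G d, ∫⁻ z, Q F (ω'.1⁻¹ * g) ((rot ω'.1).symm (z - ω'.2)) ^ n ∂volume ∂θ :=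
                lintegral_mono fun g => lintegral_mono' Measure.restrict_le_self le_rfl
            _ = ∫⁻ g : G d, ∫⁻ ζ, Q F (ω'.1⁻¹ * g) ζ ^ n ∂volume ∂θ :=
                lintegral_congr fun g => lint_ac ω' (hm' _)
            _ = _ := lintegral_mul_left_eq_self (μ := θ)
                (fun g : G d => ∫⁻ ζ, Q F g ζ ^ n ∂volume) (ω'.1⁻¹)
        · refine (hm.comp (f := fun p : G d × Pt d =>
            (ω'.1⁻¹ * p.1, (rot ω'.1).symm (p.2 - ω'.2))) ?_).aemeasurable
          refine Continuous.measurable ?_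
          refine Continuous.prodMk (by fun_prop) ?_
          exact (rot ω'.1).symm.continuous.comp (by fun_prop)
    _ = _ := by
        rw [lintegral_const, ← univ_prod_univ, Measure.prod_prod]; simp

lemma main_ineq {n : ℕ} {f : Fin n → Pt d → ℝ≥0∞} (hf : ∀ i, Measurable (f i))
    {F : Pt d → ℝ≥0∞} (hF : Measurable F) (hfF : ∀ i x, f i x ≤ F x) (B : Set (Pt d))
    (hB : MeasurableSet B)
    (O : Set (Fin n → Pt d)) (hO : MeasurableSet O)
    (hfO : ∀ ω : G d × Pt d, ω.2 ∈ B → ∀ w : Fin n → Pt d, (∀ i, f i (ac ω (w i)) ≠ 0) → w ∈ O) :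
    ((∏ i, ∫⁻ x, f i x) * volume B) ^ 2 ≤
      volume O * ((∫⁻ g : G d, ∫⁻ ζ, Q F g ζ ^ n ∂volume ∂θ) * volume B) := by
  set ν : Measure (G d × Pt d) := θ.prod (volume.restrict B) with hν
  have hνu : ν univ = volume B := by rw [hν, ← univ_prod_univ, Measure.prod_prod]; simp
  have h0 : ∀ w, w ∉ O → Φ ν f w = 0 := by
    intro w hw
    unfold Φ
    rw [lintegral_eq_zero_iff (prod_meas1 hf w)]
    have : ∀ᵐ ω ∂ν, ω.2 ∈ B := by
      have := (Measure.quasiMeasurePreserving_snd (μ := (θ : Measure (G d)))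
        (ν := volume.restrict B)).ae (ae_restrict_mem hB)
      exact this
    filter_upwards [this] with ω hω
    by_contra hne
    apply hw
    refine hfO ω hω w fun i hi => hne ?_
    exact Finset.prod_eq_zero (Finset.mem_univ i) hi
  rw [← hνu, ← Φ_int ν hf]
  have h1 : ∀ w, Φ ν f w = O.indicator (fun _ => (1:ℝ≥0∞)) w * Φ ν f w := by
    intro w
    by_cases hw : w ∈ O
    · simp [hw]
    · simp [h0 w hw]
  calc (∫⁻ w, Φ ν f w) ^ 2 = (∫⁻ w, O.indicator (fun _ => (1:ℝ≥0∞)) w * Φ ν f w) ^ 2 := by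
        simp only [← h1]
    _ ≤ (∫⁻ w, O.indicator (fun _ => (1:ℝ≥0∞)) w ^ 2) * ∫⁻ w, Φ ν f w ^ 2 :=
        cs _ (measurable_const.indicator hO).aemeasurable (Φ_meas ν hf).aemeasurable
    _ ≤ _ := by
        refine mul_le_mul' (le_of_eq ?_) ((Φ_sq ν hf hF hfF).trans ?_)
        · rw [← lintegral_indicator_one hO]
          refine lintegral_congr fun w => ?_
          by_cases hw : w ∈ O <;> simp [hw]
        · rw [hνu]; exact inv_J hF n B

end Asm

namespace Asm
open Ort Fou
open scoped Real
variable {d : ℕ}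

lemma mbS (ε : ℝ) : MeasurableSet {p : Pt d × Pt d | dist p.2 p.1 ≤ ε} :=
  (isClosed_le (by fun_prop) continuous_const).measurableSet

lemma mb_meas (ρ : Measure (Pt d)) [SFinite ρ] (ε : ℝ) : Measurable (fun v => ρ (closedBall v ε)) :=
  measurable_measure_prodMk_left (ν := ρ) (mbS ε)

lemma mb_int (ρ : Measure (Pt d)) [SFinite ρ] (ε : ℝ) :
    ∫⁻ v, ρ (closedBall v ε) = volume (closedBall (0 : Pt d) ε) * ρ univ := by
  have h1 := Measure.prod_apply (μ := (volume : Measure (Pt d))) (ν := ρ) (mbS ε)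
  have h2 := Measure.prod_apply_symm (μ := (volume : Measure (Pt d))) (ν := ρ) (mbS ε)
  have h3 : ∀ y : Pt d, (fun x => (x, y)) ⁻¹' {p : Pt d × Pt d | dist p.2 p.1 ≤ ε} = closedBall y ε := by
    intro y; ext x; simp [dist_comm]
  have h4 : ∀ x : Pt d, Prod.mk x ⁻¹' {p : Pt d × Pt d | dist p.2 p.1 ≤ ε} = closedBall x ε := by
    intro y; ext x; simp
  simp only [h3, h4, Measure.addHaar_closedBall_center] at h1 h2
  rw [← h1, h2, lintegral_const]

lemma gau_lower {ε : ℝ} (hε : 0 < ε) {v : Pt d} (hv : ‖v‖ ≤ 2 * ε) :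
    1 ≤ Real.exp (4 * π) * ε ^ d * gau (1 / ε) v := by
  unfold gau
  have h1 : Real.exp (4 * π) * ε ^ d * ((1 / ε) ^ d * Real.exp (-(π * (1 / ε) ^ 2 * ‖v‖ ^ 2)))
      = Real.exp (4 * π - π * (‖v‖ / ε) ^ 2) := by
    rw [sub_eq_add_neg, Real.exp_add]
    have : ε ^ d * (1 / ε) ^ d = 1 := by rw [← mul_pow]; field_simp; simp
    have h2 : π * (1 / ε) ^ 2 * ‖v‖ ^ 2 = π * (‖v‖ / ε) ^ 2 := by field_simp
    rw [h2]
    linear_combination (Real.exp (4 * π) * Real.exp (-(π * (‖v‖ / ε) ^ 2))) * this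
  rw [h1]
  apply Real.one_le_exp
  have h3 : ‖v‖ / ε ≤ 2 := by rw [div_le_iff₀ hε]; exact hv
  have h4 : (‖v‖ / ε) ^ 2 ≤ 2 ^ 2 := pow_le_pow_left₀ (by positivity) h3 2
  nlinarith [Real.pi_pos]

/-- normalised density -/
def dens (ρ : Measure (Pt d)) (ε : ℝ) (v : Pt d) : ℝ≥0∞ :=
  (volume (closedBall (0 : Pt d) ε))⁻¹ * ρ (closedBall v ε)

lemma dens_meas (ρ : Measure (Pt d)) [SFinite ρ] (ε : ℝ) : Measurable (dens ρ ε) :=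
  (mb_meas ρ ε).const_mul _

lemma vol_ne_zero {ε : ℝ} (hε : 0 < ε) : volume (closedBall (0 : Pt d) ε) ≠ 0 :=
  (measure_closedBall_pos _ _ hε).ne'

lemma vol_ne_top (ε : ℝ) : volume (closedBall (0 : Pt d) ε) ≠ ⊤ := measure_closedBall_lt_top.ne

lemma dens_int (ρ : Measure (Pt d)) [SFinite ρ] {ε : ℝ} (hε : 0 < ε) :
    ∫⁻ v, dens ρ ε v = ρ univ := by
  unfold dens
  rw [lintegral_const_mul _ (mb_meas ρ ε), mb_int, ← mul_assoc,
    ENNReal.inv_mul_cancel (vol_ne_zero hε) (vol_ne_top ε), one_mul]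

lemma gauR_meas (R : ℝ) (γ : G d) (ζ : Pt d) :
    Measurable (fun p : Pt d × Pt d => ENNReal.ofReal (gau R (rot γ p.1 + ζ - p.2))) := by
  refine ENNReal.measurable_ofReal.comp ((gau_cont R).measurable.comp ?_)
  have h1 : Continuous fun p : Pt d × Pt d => rot γ p.1 := (rot γ).continuous.comp continuous_fst
  exact ((h1.add continuous_const).sub continuous_snd).measurable

lemma Q_le (μ : Measure (Pt d)) [IsProbabilityMeasure μ] {ε : ℝ} (hε : 0 < ε) (γ : G d) (ζ : Pt d) :
    Q (dens μ ε) γ ζ ≤ (ENNReal.ofReal (Real.exp (4 * π)) * (volume (closedBall (0 : Pt d) 1))⁻¹) *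
      N μ (1 / ε) γ ζ := by
  set V := volume (closedBall (0 : Pt d) ε) with hV
  have hV0 : V ≠ 0 := vol_ne_zero hε
  have hVt : V ≠ ⊤ := vol_ne_top ε
  have hVe : V = ENNReal.ofReal (ε ^ d) * volume (closedBall (0 : Pt d) 1) := by
    rw [hV, Measure.addHaar_closedBall' _ _ hε.le]; simp
  have hrc : Continuous fun v : Pt d => rot γ v := (rot γ).continuous
  let S : Set (Pt d × (Pt d × Pt d)) := {q | dist q.2.1 q.1 ≤ ε ∧ dist q.2.2 (rot γ q.1 + ζ) ≤ ε}
  have hS : MeasurableSet S := by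
    refine IsClosed.measurableSet ?_
    refine IsClosed.inter (s₁ := {q : Pt d × (Pt d × Pt d) | dist q.2.1 q.1 ≤ ε})
      (s₂ := {q : Pt d × (Pt d × Pt d) | dist q.2.2 (rot γ q.1 + ζ) ≤ ε}) ?_ ?_
    · exact isClosed_le (by fun_prop) continuous_const
    · refine isClosed_le (Continuous.dist (by fun_prop) ?_) continuous_const
      exact (hrc.comp continuous_fst).add continuous_const
  have h1 := Measure.prod_apply (μ := (volume : Measure (Pt d))) (ν := μ.prod μ) hS
  have h2 := Measure.prod_apply_symm (μ := (volume : Measure (Pt d))) (ν := μ.prod μ) hS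
  have h3 : ∀ v, (μ.prod μ) (Prod.mk v ⁻¹' S) = μ (closedBall v ε) * μ (closedBall (rot γ v + ζ) ε) := by
    intro v
    rw [← Measure.prod_prod]
    rfl
  simp only [h3] at h1
  have h4 : ∀ p : Pt d × Pt d, volume ((fun x => (x, p)) ⁻¹' S) ≤
      (V * ENNReal.ofReal (Real.exp (4 * π) * ε ^ d)) *
        ENNReal.ofReal (gau (1 / ε) (rot γ p.1 + ζ - p.2)) := by
    intro p
    rcases ((fun x => (x, p)) ⁻¹' S).eq_empty_or_nonempty with he | ⟨v, hv⟩
    · rw [he]; simp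
    · have hv1 : dist p.1 v ≤ ε := hv.1
      have hv2 : dist p.2 (rot γ v + ζ) ≤ ε := hv.2
      have hn : ‖rot γ p.1 + ζ - p.2‖ ≤ 2 * ε := by
        have e1 : rot γ p.1 + ζ - p.2 = rot γ (p.1 - v) - (p.2 - (rot γ v + ζ)) := by
          rw [map_sub]; abel
        rw [e1]
        refine (norm_sub_le _ _).trans ?_
        rw [LinearIsometryEquiv.norm_map, ← dist_eq_norm, ← dist_eq_norm]
        linarith
      have h5 := gau_lower hε hn
      calc volume ((fun x => (x, p)) ⁻¹' S) ≤ volume (closedBall p.1 ε) := by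
            refine measure_mono fun x hx => ?_
            have : dist p.1 x ≤ ε := hx.1
            rw [mem_closedBall, dist_comm]; exact this
        _ = V * 1 := by rw [Measure.addHaar_closedBall_center, mul_one]
        _ ≤ V * ENNReal.ofReal (Real.exp (4 * π) * ε ^ d * gau (1 / ε) (rot γ p.1 + ζ - p.2)) := by
            gcongr
            exact ENNReal.one_le_ofReal.2 h5
        _ = _ := by
            rw [ENNReal.ofReal_mul (by positivity), mul_assoc]
  have h6 : ∫⁻ v, μ (closedBall v ε) * μ (closedBall (rot γ v + ζ) ε) ≤
      (V * ENNReal.ofReal (Real.exp (4 * π) * ε ^ d)) * N μ (1 / ε) γ ζ := by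
    rw [← h1, h2]
    refine (lintegral_mono h4).trans (le_of_eq ?_)
    rw [lintegral_const_mul _ (gauR_meas _ _ _)]
    rfl
  have h7 : Q (dens μ ε) γ ζ = (V⁻¹ * V⁻¹) *
      ∫⁻ v, μ (closedBall v ε) * μ (closedBall (rot γ v + ζ) ε) := by
    unfold Q dens
    rw [← lintegral_const_mul]
    · refine lintegral_congr fun v => ?_
      rw [← hV]; ring
    · exact (mb_meas μ ε).mul ((mb_meas μ ε).comp (hrc.add continuous_const).measurable)
  rw [h7]
  refine (mul_le_mul_right h6 _).trans (le_of_eq ?_)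
  rw [← mul_assoc]
  congr 1
  calc V⁻¹ * V⁻¹ * (V * ENNReal.ofReal (Real.exp (4 * π) * ε ^ d))
      = (V⁻¹ * V) * (V⁻¹ * ENNReal.ofReal (Real.exp (4 * π) * ε ^ d)) := by ring
    _ = V⁻¹ * (ENNReal.ofReal (Real.exp (4 * π)) * ENNReal.ofReal (ε ^ d)) := by
        rw [ENNReal.inv_mul_cancel hV0 hVt, one_mul, ENNReal.ofReal_mul (by positivity)]
    _ = ENNReal.ofReal (Real.exp (4 * π)) * (volume (closedBall (0 : Pt d) 1))⁻¹ *
          ((ENNReal.ofReal (ε ^ d))⁻¹ * ENNReal.ofReal (ε ^ d)) := by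
        rw [hVe, ENNReal.mul_inv (Or.inr (vol_ne_top 1)) (Or.inr (vol_ne_zero one_pos))]
        ring
    _ = _ := by
        rw [ENNReal.inv_mul_cancel _ ENNReal.ofReal_ne_top, mul_one]
        simp only [ne_eq, ENNReal.ofReal_eq_zero, not_le]; positivity

/-- rigid motions of tuples -/
def mv {n : ℕ} (q : (G d × Pt d) × (Fin n → Pt d)) : Fin n → Pt d :=
  fun i => rot q.1.1 (q.2 i) + q.1.2

lemma mv_cont {n : ℕ} : Continuous (mv : (G d × Pt d) × (Fin n → Pt d) → Fin n → Pt d) := by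
  refine continuous_pi fun i => ?_
  have := rot_cont.comp (f := fun q : (G d × Pt d) × (Fin n → Pt d) => (q.1.1, q.2 i)) (by fun_prop)
  exact this.add (by fun_prop : Continuous fun q : (G d × Pt d) × (Fin n → Pt d) => q.1.2)

lemma dist_ac (ω : G d × Pt d) (w x : Pt d) : dist w (rot ω.1 x + ω.2) = dist x (ac ω w) := by
  unfold ac
  rw [← (rot ω.1).dist_map x, LinearIsometryEquiv.apply_symm_apply, dist_comm w,
    dist_eq_norm, dist_eq_norm]
  congr 1; abel

lemma mv_nondeg {k : ℕ} (ω : G d × Pt d) {x : Fin (k + 1) → Pt d} (hx : Nondeg d k x) :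
    Nondeg d k (mv (ω, x)) := by
  unfold Nondeg at *
  have := hx.map' (rot ω.1).toLinearEquiv.toLinearMap (LinearEquiv.ker _)
  have e : (fun i : Fin k => mv (ω, x) i.succ - mv (ω, x) 0)
      = ⇑(rot ω.1).toLinearEquiv.toLinearMap ∘ fun i : Fin k => x i.succ - x 0 := by
    funext i; simp [mv]
  rw [e]; exact this

lemma mv_simplex {k : ℕ} (ω : G d × Pt d) (x : Fin (k + 1) → Pt d) :
    simplexMap d k (mv (ω, x)) = simplexMap d k x := by
  funext p
  simp [simplexMap, mv]

theorem final (k : ℕ) (hd : 2 ≤ d) (hk : 2 ≤ k) (hkd : k ≤ d)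
    (E : Set (Pt d)) (hE : IsCompact E)
    (hdim : ((d * k + 1 : ℕ) : ℝ≥0∞) / ((k + 1 : ℕ) : ℝ≥0∞) < dimH E) :
    0 < volume (Tconf d k E) := by
  rw [pos_iff_ne_zero]
  intro hT
  -- choose s
  obtain ⟨s, hs1, hs2⟩ : ∃ s : ℝ, ((d * k + 1 : ℕ) : ℝ) / ((k + 1 : ℕ) : ℝ) < s ∧
      ENNReal.ofReal s < dimH E := by
    obtain ⟨t, ht1, ht2⟩ := ENNReal.lt_iff_exists_nnreal_btwn.1 hdim
    refine ⟨t, ?_, by simpa using ht2⟩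
    have : ENNReal.ofReal (((d * k + 1 : ℕ) : ℝ) / ((k + 1 : ℕ) : ℝ)) < ENNReal.ofReal t := by
      rw [ENNReal.ofReal_div_of_pos (by positivity), ENNReal.ofReal_natCast,
        ENNReal.ofReal_natCast, ENNReal.ofReal_coe_nnreal]
      exact ht1
    exact (ENNReal.ofReal_lt_ofReal_iff_of_nonneg (by positivity)).1 this
  have hk1 : (0:ℝ) < (k + 1 : ℕ) := by positivity
  have hs3 : (d * k + 1 : ℝ) < s * (k + 1) := by
    have := (div_lt_iff₀ hk1).1 hs1
    push_cast at this; exact this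
  have hdr : (2:ℝ) ≤ d := by exact_mod_cast hd
  have hkr : (2:ℝ) ≤ k := by exact_mod_cast hk
  have hkdr : (k:ℝ) ≤ d := by exact_mod_cast hkd
  have hs_one : 1 ≤ s := by nlinarith
  have hsk : (k:ℝ) < s + 1 := by nlinarith
  have hs0 : 0 < s := by linarith
  have hsd : s ≤ d := by
    have h1 : dimH E ≤ d := by
      have := dimH_mono (subset_univ E)
      rw [Real.dimH_univ_eq_finrank] at this
      simpa using this
    have h2 := (hs2.trans_le h1).le
    have h3 : ENNReal.ofReal s ≤ ENNReal.ofReal (d:ℝ) := by simpa using h2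
    exact (ENNReal.ofReal_le_ofReal_iff (by positivity)).1 h3
  obtain ⟨μ, hμp, hμE, C, hC, hFr⟩ := Fro.frostman d E hE s hs0 hs2
  have hFr' : Fr μ C s := hFr
  obtain ⟨M, hM⟩ := hE.isBounded.exists_norm_le
  have hM' : ∀ᵐ x ∂μ, ‖x‖ ≤ max M 0 := by
    have : ∀ᵐ x ∂μ, x ∈ E := hμE
    filter_upwards [this] with x hx
    exact (hM x hx).trans (le_max_left _ _)
  obtain ⟨J, hJt, hJ⟩ := J_bound (d := d) (by omega) hC hs_one hsd hFr' (le_max_right M 0) hM' (k - 1) (by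
    have : ((k - 1 : ℕ) : ℝ) = k - 1 := by
      rw [Nat.cast_sub (by omega)]; simp
    rw [this]; nlinarith)
  have hk2 : k - 1 + 2 = k + 1 := by omega
  rw [hk2] at hJ
  obtain ⟨K, hKc, hKE, hKμ, hKn⟩ := Ndg.exists_sets k hC hs0 hFr' hsk hE hμE
  set B : Set (Pt d) := closedBall 0 1 with hB
  let K0 : Set (Fin (k + 1) → Pt d) := mv '' (((univ : Set (G d)) ×ˢ B) ×ˢ (univ.pi K))
  have hK0c : IsCompact K0 :=
    (((isCompact_univ.prod (isCompact_closedBall 0 1)).prod (isCompact_univ_pi hKc))).image mv_cont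
  have hK0v : volume K0 = 0 := by
    refine measure_mono_null ?_ (Sub.null_Tconf d k (Tconf d k E) hT)
    rintro _ ⟨⟨ω, x⟩, ⟨-, hx⟩, rfl⟩
    have hx' : ∀ i, x i ∈ K i := fun i => hx i (mem_univ i)
    refine ⟨mv_nondeg ω (hKn x hx'), ?_⟩
    rw [mv_simplex]
    exact ⟨x, ⟨fun i => hKE i (hx' i), hKn x hx'⟩, rfl⟩
  set c : ℝ≥0∞ := ENNReal.ofReal (Real.exp (4 * π)) * (volume (closedBall (0 : Pt d) 1))⁻¹ with hc
  have hct : c ≠ ⊤ := ENNReal.mul_ne_top ENNReal.ofReal_ne_top (ENNReal.inv_ne_top.2 (vol_ne_zero one_pos))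
  set A : ℝ≥0∞ := (c ^ (k + 1) * J) * volume B with hA
  have hAt : A ≠ ⊤ := ENNReal.mul_ne_top (ENNReal.mul_ne_top (ENNReal.pow_ne_top hct) hJt) (vol_ne_top 1)
  set c0 : ℝ≥0∞ := ((∏ i, μ (K i)) * volume B) ^ 2 with hc0
  have hc00 : c0 ≠ 0 :=
    pow_ne_zero _ (mul_ne_zero (Finset.prod_ne_zero_iff.2 fun i _ => hKμ i) (vol_ne_zero one_pos))
  obtain ⟨δ, hδ, hδA⟩ := ENNReal.exists_nnreal_pos_mul_lt hAt hc00
  have hlf : IsLocallyFiniteMeasure (volume : Measure (Fin (k + 1) → Pt d)) := by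
    rw [volume_pi]; infer_instance
  have hor : (volume : Measure (Fin (k + 1) → Pt d)).OuterRegular := inferInstance
  obtain ⟨O, hKO, hOo, hOv⟩ := K0.exists_isOpen_lt_of_lt (μ := volume) (δ : ℝ≥0∞)
    (by rw [hK0v]; exact_mod_cast hδ)
  obtain ⟨ε, hε, hεO⟩ := hK0c.exists_cthickening_subset_open hOo hKO
  have key := main_ineq (f := fun i => dens (μ.restrict (K i)) ε) (fun i => dens_meas _ ε)
    (F := dens μ ε) (dens_meas μ ε)
    (fun i x => mul_le_mul_right (Measure.restrict_le_self _) _) B isClosed_closedBall.measurableSet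
    O hOo.measurableSet (by
      intro ω hω w hw
      apply hεO
      have : ∀ i, ∃ x ∈ K i, dist x (ac ω (w i)) ≤ ε := by
        intro i
        have h1 : (μ.restrict (K i)) (closedBall (ac ω (w i)) ε) ≠ 0 := fun h => hw i (by
          simp [dens, h])
        rw [Measure.restrict_apply isClosed_closedBall.measurableSet] at h1
        obtain ⟨x, hx1, hx2⟩ := nonempty_of_measure_ne_zero h1
        exact ⟨x, hx2, hx1⟩
      choose x hxK hxd using this
      refine mem_cthickening_of_dist_le w (mv (ω, x)) ε K0
        ⟨(ω, x), ⟨⟨mem_univ _, hω⟩, fun i _ => hxK i⟩, rfl⟩ ?_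
      rw [dist_pi_le_iff hε.le]
      intro i
      exact (dist_ac ω (w i) (x i)).le.trans (hxd i))
  have hint : ∀ i, ∫⁻ x, dens (μ.restrict (K i)) ε x = μ (K i) := by
    intro i; rw [dens_int _ hε]; simp
  simp only [hint] at key
  have hQJ : ∫⁻ g : G d, ∫⁻ ζ, Q (dens μ ε) g ζ ^ (k + 1) ∂volume ∂θ ≤ c ^ (k + 1) * J := by
    calc _ ≤ ∫⁻ g : G d, ∫⁻ ζ, c ^ (k + 1) * N μ (1 / ε) g ζ ^ (k + 1) ∂volume ∂θ := by
          refine lintegral_mono fun g => lintegral_mono fun ζ => ?_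
          dsimp only
          rw [← mul_pow]
          exact pow_le_pow_left' (Q_le μ hε g ζ) _
      _ = c ^ (k + 1) * ∫⁻ g : G d, ∫⁻ ζ, N μ (1 / ε) g ζ ^ (k + 1) ∂volume ∂θ := by
          simp only [lintegral_const_mul' _ _ (ENNReal.pow_ne_top (n := k + 1) hct)]
      _ ≤ _ := by
          gcongr
          exact hJ (1 / ε) (by positivity)
  have : c0 ≤ δ * A := key.trans (mul_le_mul' hOv.le (mul_le_mul_left hQJ _))
  exact absurd this (not_le.2 hδA)

end Asm

theorem stmt2 (d k : ℕ) (hd : 2 ≤ d) (hk : 2 ≤ k) (hkd : k ≤ d)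
    (E : Set (Pt d)) (hE : IsCompact E)
    (hdim : ((d * k + 1 : ℕ) : ℝ≥0∞) / ((k + 1 : ℕ) : ℝ≥0∞) < dimH E) :
    0 < volume (Tconf d k E) := by
  exact Asm.final k hd hk hkd E hE hdim
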